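/- arXiv:math/0212179 — 2 statements merged into one kernel-verified Lean document; each statement's English description precedes it below -/
import Mathlib

section
/- Let A ⊂ ℤⁿ be a finite set and C = diag(c_a)_{a∈A} positive definite, and consider the unmixed complex random polynomial system with A_1 = ⋯ = A_n = A and C_1 = ⋯ = C_n = C. Then the expected number of roots of f in (ℂ*)ⁿ equals n!·λ(Conv(A)): ∫_ℱ #{z ∈ (ℂ*)ⁿ : f¹(z) = ⋯ = fⁿ(z) = 0} dγ(f) = n!·λ(Conv(A)), where λ is Lebesgue measure on ℝⁿ and Conv(A) is the convex hull of A. -/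
open MeasureTheory Finset
open scoped ENNReal Pointwise

noncomputable section

namespace SparseRandom

variable {n : ℕ}

/-- `exp(p+iq) ∈ (ℂ*)ⁿ` in logarithmic coordinates. -/
def zexp (p q : Fin n → ℝ) : Fin n → ℂ :=
  fun j => Complex.exp ((p j : ℂ) + (q j : ℂ) * Complex.I)

/-- The (Laurent) monomial `z^a` for an integer exponent vector `a`. -/
def mono (z : Fin n → ℂ) (a : Fin n → ℤ) : ℂ := ∏ j, z j ^ (a j)

/-- Evaluation of the polynomial with support `A` and coefficient vector `f` at `z`. -/
def evalP {A : Finset (Fin n → ℤ)} (f : A → ℂ) (z : Fin n → ℂ) : ℂ :=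
  ∑ a : A, f a * mono z (a : Fin n → ℤ)

/-- The squared weighted norm `‖f‖²_{C⁻¹} = ∑_a |f_a|²/c_a`. -/
def nsq {A : Finset (Fin n → ℤ)} (c : (Fin n → ℤ) → ℝ) (f : A → ℂ) : ℝ :=
  ∑ a : A, Complex.normSq (f a) / c (a : Fin n → ℤ)

/-- The Gaussian probability measure `γ = ⊗ᵢ γ_{Aᵢ,Cᵢ}` on the system space
`ℱ = Πᵢ ℱ_ℂ(Aᵢ)`, given by its density w.r.t. Lebesgue measure. -/
def gauss (A : Fin n → Finset (Fin n → ℤ)) (c : Fin n → (Fin n → ℤ) → ℝ) :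
    Measure ((i : Fin n) → (A i) → ℂ) :=
  volume.withDensity fun f => ENNReal.ofReal
    (∏ i, (((2 * Real.pi) ^ (A i).card)⁻¹ * (∏ a : A i, c i (a : Fin n → ℤ))⁻¹ *
      Real.exp (- nsq (c i) (f i) / 2)))

/-- `z` is a common root of the system `f`. -/
def isRootAt (A : Fin n → Finset (Fin n → ℤ)) (f : (i : Fin n) → (A i) → ℂ)
    (z : Fin n → ℂ) : Prop :=
  ∀ i, evalP (f i) z = 0

/-- The Jacobian matrix `(∂f^i/∂x_j)` of the system `f` at a point `z ∈ (ℂ*)ⁿ`. -/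
def jac (A : Fin n → Finset (Fin n → ℤ)) (f : (i : Fin n) → (A i) → ℂ)
    (z : Fin n → ℂ) : Matrix (Fin n) (Fin n) ℂ :=
  Matrix.of fun i j => ∑ a : A i, f i a * ((a : Fin n → ℤ) j : ℂ) * mono z (a : Fin n → ℤ) / z j

/-- The matrix `D̂(f)_{ij} = z_j ∂f^i/∂x_j(z)`, i.e. the derivative of the system in the
logarithmic variable `p+iq`. -/
def Dhat (A : Fin n → Finset (Fin n → ℤ)) (f : (i : Fin n) → (A i) → ℂ)
    (z : Fin n → ℂ) : Matrix (Fin n) (Fin n) ℂ :=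
  Matrix.of fun i j => ∑ a : A i, f i a * ((a : Fin n → ℤ) j : ℂ) * mono z (a : Fin n → ℤ)

/-- `Σ_{(p,q)}`: systems with `exp(p+iq)` as a degenerate root. -/
def SigmaPQ (A : Fin n → Finset (Fin n → ℤ)) (p q : Fin n → ℝ) :
    Set ((i : Fin n) → (A i) → ℂ) :=
  {g | isRootAt A g (zexp p q) ∧ (jac A g (zexp p q)).det = 0}

/-- Multiprojective distance `d_ℙ(f,g)`. -/
def dP (c : Fin n → (Fin n → ℤ) → ℝ) {A : Fin n → Finset (Fin n → ℤ)}
    (f g : (i : Fin n) → (A i) → ℂ) : ℝ :=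
  Real.sqrt (∑ i, (⨅ lam : ℂ, nsq (c i) (fun a => f i a - lam * g i a)) / nsq (c i) (f i))

/-- Distance from `f` to a set `S` of systems. -/
def dPS (c : Fin n → (Fin n → ℤ) → ℝ) {A : Fin n → Finset (Fin n → ℤ)}
    (f : (i : Fin n) → (A i) → ℂ) (S : Set ((i : Fin n) → (A i) → ℂ)) : ℝ :=
  sInf ((dP c f) '' S)

/-- The image of `A ⊂ ℤⁿ` in `ℝⁿ`. -/
def coeA (A : Finset (Fin n → ℤ)) : Set (Fin n → ℝ) :=
  (fun (a : Fin n → ℤ) (j : Fin n) => (a j : ℝ)) '' (A : Set (Fin n → ℤ))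

/-- The Kähler potential `g_A(p) = ½ log ∑_{a∈A} c_a e^{2⟨a,p⟩}`. -/
def gA (A : Finset (Fin n → ℤ)) (c : (Fin n → ℤ) → ℝ) (p : Fin n → ℝ) : ℝ :=
  (1 / 2) * Real.log (∑ a : A, c (a : Fin n → ℤ) * Real.exp (2 * ∑ j, ((a : Fin n → ℤ) j : ℝ) * p j))

/-- `H_A(p) = ½ ∇² g_A(p)`, half the Hessian of the Kähler potential. -/
def HessA (A : Finset (Fin n → ℤ)) (c : (Fin n → ℤ) → ℝ) (p : Fin n → ℝ) :
    Matrix (Fin n) (Fin n) ℝ :=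
  Matrix.of fun j k =>
    (1 / 2) * fderiv ℝ (fun x => fderiv ℝ (gA A c) x (Pi.single j 1)) p (Pi.single k 1)

/-- The mixed integrand `I(p)`, the coefficient of the volume form in
`(−1)^{n(n−1)/2} ω_{A_1} ∧ ⋯ ∧ ω_{A_n}`. -/
def mixedI (A : Fin n → Finset (Fin n → ℤ)) (c : Fin n → (Fin n → ℤ) → ℝ)
    (p : Fin n → ℝ) : ℝ :=
  ∑ σ : Equiv.Perm (Fin n), ∑ τ : Equiv.Perm (Fin n),
    ((Equiv.Perm.sign σ : ℤ) : ℝ) * ((Equiv.Perm.sign τ : ℤ) : ℝ) *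
      ∏ i, HessA (A i) (c i) p (σ i) (τ i)

end SparseRandom

section
open MeasureTheory Finset
open scoped ENNReal Pointwise
namespace SparseRandom

theorem area_formula {E : Type*} [NormedAddCommGroup E] [NormedSpace ℝ E] [FiniteDimensional ℝ E]
    [MeasurableSpace E] [BorelSpace E] (μ : Measure E) [μ.IsAddHaarMeasure]
    (Ψ : E → E) (Ψ' : E → E →L[ℝ] E) (hd : ∀ x, HasFDerivAt Ψ (Ψ' x) x) (hc : Continuous Ψ')
    (S : Set E) (hS : MeasurableSet S) (ρ : E → ℝ≥0∞) (hρ : Measurable ρ) :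
    AEMeasurable (fun y => Measure.count (S ∩ Ψ ⁻¹' {y}) * ρ y) μ ∧
    ∫⁻ y, Measure.count (S ∩ Ψ ⁻¹' {y}) * ρ y ∂μ
      = ∫⁻ x in S, ENNReal.ofReal |(Ψ' x).det| * ρ (Ψ x) ∂μ := by
  have hΨc : Continuous Ψ := continuous_iff_continuousAt.2 fun x => (hd x).continuousAt
  have hdet : Continuous fun x => (Ψ' x).det := ContinuousLinearMap.continuous_det.comp hc
  set Z : Set E := {x | (Ψ' x).det = 0} with hZ
  have hZm : MeasurableSet Z := (isClosed_singleton.preimage hdet).measurableSet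
  have hloc : ∀ x : (Zᶜ : Set E), ∃ U : Set E, IsOpen U ∧ (x : E) ∈ U ∧ Set.InjOn Ψ U := by
    rintro ⟨x, hx⟩
    have hs : HasStrictFDerivAt Ψ (Ψ' x) x :=
      hasStrictFDerivAt_of_hasFDerivAt_of_continuousAt (Filter.Eventually.of_forall hd)
        hc.continuousAt
    have hx' : (Ψ' x).det ≠ 0 := hx
    have hs' : HasStrictFDerivAt Ψ
      ((ContinuousLinearMap.toContinuousLinearEquivOfDetNeZero (Ψ' x) hx' : E ≃L[ℝ] E) : E →L[ℝ] E) x := by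
      simpa using hs
    refine ⟨(hs'.toOpenPartialHomeomorph Ψ).source, (hs'.toOpenPartialHomeomorph Ψ).open_source,
      hs'.mem_toOpenPartialHomeomorph_source, ?_⟩
    exact (hs'.toOpenPartialHomeomorph Ψ).injOn
  choose U hUo hxU hUi using hloc
  obtain ⟨T, hTc, hT⟩ := TopologicalSpace.isOpen_iUnion_countable U hUo
  have hcov : Zᶜ ⊆ ⋃ i ∈ T, U i := by
    rw [hT]; intro x hx; exact Set.mem_iUnion.2 ⟨⟨x, hx⟩, hxU ⟨x, hx⟩⟩
  obtain ⟨V, hVm, hVi, hVcov⟩ : ∃ V : ℕ → Set E, (∀ k, MeasurableSet (V k)) ∧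
      (∀ k, Set.InjOn Ψ (V k)) ∧ Zᶜ ⊆ ⋃ k, V k := by
    rcases T.eq_empty_or_nonempty with h | h
    · refine ⟨fun _ => ∅, by simp, by simp, ?_⟩
      simpa [h] using hcov
    · obtain ⟨e, he⟩ := hTc.exists_eq_range h
      refine ⟨fun k => U (e k), fun k => (hUo _).measurableSet, fun k => hUi _, ?_⟩
      simpa [he] using hcov
  set W : ℕ → Set E := fun k => (S ∩ Zᶜ) ∩ disjointed V k with hW
  have hWm : ∀ k, MeasurableSet (W k) := fun k =>
    (hS.inter hZm.compl).inter (MeasurableSet.disjointed hVm k)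
  have hWd : Pairwise (Function.onFun Disjoint W) := fun i j hij =>
    ((disjoint_disjointed V) hij).mono Set.inter_subset_right Set.inter_subset_right
  have hWU : ⋃ k, W k = S ∩ Zᶜ := by
    rw [← Set.inter_iUnion, iUnion_disjointed]
    exact Set.inter_eq_left.2 (Set.inter_subset_right.trans hVcov)
  have hWi : ∀ k, Set.InjOn Ψ (W k) := fun k =>
    (hVi k).mono (Set.inter_subset_right.trans (disjointed_subset V k))
  have hnull : μ (Ψ '' (S ∩ Z)) = 0 :=
    addHaar_image_eq_zero_of_det_fderivWithin_eq_zero μ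
      (fun x _ => (hd x).hasFDerivWithinAt) (fun x hx => hx.2)
  have hae : ∀ᵐ y ∂μ, Measure.count (S ∩ Ψ ⁻¹' {y}) * ρ y
      = ∑' k, (Ψ '' W k).indicator ρ y := by
    have : ∀ᵐ y ∂μ, y ∉ Ψ '' (S ∩ Z) := measure_eq_zero_iff_ae_notMem.1 hnull
    filter_upwards [this] with y hy
    have h1 : S ∩ Ψ ⁻¹' {y} = ⋃ k, (W k ∩ Ψ ⁻¹' {y}) := by
      rw [← Set.iUnion_inter, hWU]
      ext x
      constructor
      · rintro ⟨hxS, hxy⟩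
        refine ⟨⟨hxS, fun hxZ => hy ⟨x, ⟨hxS, hxZ⟩, hxy⟩⟩, hxy⟩
      · rintro ⟨⟨hxS, _⟩, hxy⟩; exact ⟨hxS, hxy⟩
    have hm : MeasurableSet (Ψ ⁻¹' {y}) := hΨc.measurable (measurableSet_singleton y)
    rw [h1, measure_iUnion (fun i j hij => (hWd hij).mono Set.inter_subset_left
      Set.inter_subset_left) (fun k => (hWm k).inter hm), ← ENNReal.tsum_mul_right]
    congr 1
    ext k
    by_cases hk : y ∈ Ψ '' W k
    · obtain ⟨x, hx, rfl⟩ := hk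
      have : W k ∩ Ψ ⁻¹' {Ψ x} = {x} := by
        ext x'
        constructor
        · rintro ⟨h1, h2⟩; exact hWi k h1 hx h2
        · rintro rfl; exact ⟨hx, rfl⟩
      rw [this, Measure.count_singleton, one_mul, Set.indicator_of_mem (Set.mem_image_of_mem Ψ hx)]
    · have : W k ∩ Ψ ⁻¹' {y} = ∅ := by
        ext x'
        simp only [Set.mem_inter_iff, Set.mem_preimage, Set.mem_singleton_iff,
          Set.mem_empty_iff_false, iff_false]
        rintro ⟨h1, h2⟩; exact hk ⟨x', h1, h2⟩
      rw [this, Set.indicator_of_notMem hk]; simp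
  have himg : ∀ k, MeasurableSet (Ψ '' W k) := fun k =>
    measurable_image_of_fderivWithin (hWm k) (fun x _ => (hd x).hasFDerivWithinAt) (hWi k)
  refine ⟨(Measurable.ennreal_tsum fun k => hρ.indicator (himg k)).aemeasurable.congr
    (Filter.EventuallyEq.symm hae), ?_⟩
  rw [lintegral_congr_ae hae, lintegral_tsum fun k => (hρ.indicator (himg k)).aemeasurable]
  have h2 : ∀ k, ∫⁻ y, (Ψ '' W k).indicator ρ y ∂μ
      = ∫⁻ x in W k, ENNReal.ofReal |(Ψ' x).det| * ρ (Ψ x) ∂μ := fun k => by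
    rw [lintegral_indicator (himg k)]
    exact lintegral_image_eq_lintegral_abs_det_fderiv_mul μ (hWm k)
      (fun x _ => (hd x).hasFDerivWithinAt) (hWi k) ρ
  simp_rw [h2]
  rw [← lintegral_iUnion hWm hWd, hWU]
  have h3 : S = (S ∩ Zᶜ) ∪ (S ∩ Z) := by rw [← Set.inter_union_distrib_left]; simp
  conv_rhs => rw [h3]
  rw [lintegral_union (hS.inter hZm)
    (Set.disjoint_left.2 fun x hx hx' => hx.2 hx'.2)]
  have h4 : ∫⁻ x in S ∩ Z, ENNReal.ofReal |(Ψ' x).det| * ρ (Ψ x) ∂μ = 0 := by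
    rw [setLIntegral_congr_fun (g := fun _ => 0) (hS.inter hZm)]
    · simp
    · intro x hx
      have : (Ψ' x).det = 0 := hx.2
      simp [this]
  rw [h4, add_zero]
end SparseRandom
end

section
open MeasureTheory Finset
open scoped ENNReal Pointwise
namespace SparseRandom
set_option linter.unusedSectionVars false
set_option linter.unusedVariables false

def rho1 (c : ℝ) (z : ℂ) : ℝ := (2 * Real.pi * c)⁻¹ * Real.exp (-Complex.normSq z / (2 * c))

theorem rho1_nonneg {c : ℝ} (hc : 0 < c) (z : ℂ) : 0 ≤ rho1 c z := by
  unfold rho1; have := Real.pi_pos; positivity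

theorem continuous_rho1 (c : ℝ) : Continuous (rho1 c) := by
  unfold rho1; fun_prop

theorem integral_rho1 {c : ℝ} (hc : 0 < c) : ∫ z : ℂ, rho1 c z = 1 := by
  have h := Complex.integral_rpow_mul_exp_neg_mul_rpow (p := 2) (q := 0) (b := (2 * c)⁻¹)
    (by norm_num) (by norm_num) (by positivity)
  have hpi := Real.pi_pos
  unfold rho1
  rw [integral_const_mul]
  have e : (∫ z : ℂ, Real.exp (-Complex.normSq z / (2 * c))) = 2 * Real.pi * c := by
    trans ∫ x : ℂ, ‖x‖ ^ (0:ℝ) * Real.exp (-(2 * c)⁻¹ * ‖x‖ ^ (2:ℝ))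
    · congr 1; ext x
      rw [Real.rpow_zero, one_mul, Complex.normSq_eq_norm_sq]
      congr 1
      rw [show (2:ℝ) = ((2:ℕ):ℝ) by norm_num, Real.rpow_natCast]
      field_simp
    · rw [h]
      norm_num
      rw [Real.rpow_neg (by positivity), Real.rpow_one]
      field_simp
  rw [e]; field_simp

theorem integral_normSq_rho1 {c : ℝ} (hc : 0 < c) :
    ∫ z : ℂ, Complex.normSq z * rho1 c z = 2 * c := by
  have h := Complex.integral_rpow_mul_exp_neg_mul_rpow (p := 2) (q := 2) (b := (2 * c)⁻¹)
    (by norm_num) (by norm_num) (by positivity)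
  have hpi := Real.pi_pos
  unfold rho1
  have e : (∫ z : ℂ, Complex.normSq z * Real.exp (-Complex.normSq z / (2 * c)))
      = 4 * Real.pi * c ^ 2 := by
    trans ∫ x : ℂ, ‖x‖ ^ (2:ℝ) * Real.exp (-(2 * c)⁻¹ * ‖x‖ ^ (2:ℝ))
    · congr 1; ext x
      rw [Complex.normSq_eq_norm_sq, show (2:ℝ) = ((2:ℕ):ℝ) by norm_num, Real.rpow_natCast]
      congr 2
      field_simp
    · rw [h]
      norm_num
      field_simp
      norm_num
  have : ∀ z : ℂ, Complex.normSq z * ((2 * Real.pi * c)⁻¹ * Real.exp (-Complex.normSq z / (2 * c)))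
     = (2 * Real.pi * c)⁻¹ * (Complex.normSq z * Real.exp (-Complex.normSq z / (2 * c))) := by
    intro z; ring
  simp_rw [this]
  rw [integral_const_mul, e]; field_simp; ring

theorem integrable_rho1 {c : ℝ} (hc : 0 < c) : Integrable (rho1 c) :=
  Integrable.of_integral_ne_zero (by rw [integral_rho1 hc]; norm_num)

theorem integrable_normSq_rho1 {c : ℝ} (hc : 0 < c) :
    Integrable (fun z => Complex.normSq z * rho1 c z) :=
  Integrable.of_integral_ne_zero (by rw [integral_normSq_rho1 hc]; positivity)

theorem integrable_id_rho1 {c : ℝ} (hc : 0 < c) :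
    Integrable (fun z : ℂ => z * (rho1 c z : ℂ)) := by
  refine ((integrable_rho1 hc).add (integrable_normSq_rho1 hc)).mono' ?_ ?_
  · exact (continuous_id.mul
      (Complex.continuous_ofReal.comp (continuous_rho1 c))).aestronglyMeasurable
  · refine Filter.Eventually.of_forall fun z => ?_
    have h0 := rho1_nonneg hc z
    simp only [Pi.add_apply, norm_mul, Complex.norm_real, Real.norm_eq_abs, abs_of_nonneg h0,
      Complex.normSq_eq_norm_sq]
    nlinarith [sq_nonneg (‖z‖ - 1), norm_nonneg z, mul_nonneg h0 (sq_nonneg (‖z‖ - 1)), mul_nonneg h0 (sq_nonneg (‖z‖ + 1)), mul_nonneg h0 (sq_nonneg (‖z‖))]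

theorem integral_id_rho1 {c : ℝ} : ∫ z : ℂ, z * (rho1 c z : ℂ) = 0 := by
  have h := integral_neg_eq_self (fun z : ℂ => z * (rho1 c z : ℂ)) volume
  have e : ∀ z : ℂ, (-z) * (rho1 c (-z) : ℂ) = -(z * (rho1 c z : ℂ)) := by
    intro z; unfold rho1; rw [Complex.normSq_neg]; ring
  simp_rw [e] at h
  rw [integral_neg] at h
  exact self_eq_neg.mp h.symm

theorem integrable_conj_rho1 {c : ℝ} (hc : 0 < c) :
    Integrable (fun z : ℂ => (starRingEnd ℂ) z * (rho1 c z : ℂ)) := by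
  refine (integrable_id_rho1 hc).norm.mono' ?_ ?_
  · exact (Complex.continuous_conj.mul
      (Complex.continuous_ofReal.comp (continuous_rho1 c))).aestronglyMeasurable
  · exact Filter.Eventually.of_forall fun z => by simp

theorem integral_conj_rho1 {c : ℝ} : ∫ z : ℂ, (starRingEnd ℂ) z * (rho1 c z : ℂ) = 0 := by
  have := integral_conj (μ := volume) (f := fun z : ℂ => z * (rho1 c z : ℂ))
  rw [integral_id_rho1] at this
  simpa using this

variable {ι : Type*} [Fintype ι] [DecidableEq ι]

def hfac (c : ι → ℝ) (a b k : ι) (z : ℂ) : ℂ :=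
  (if k = a then z else 1) * (if k = b then (starRingEnd ℂ) z else 1) * (rho1 (c k) z : ℂ)

theorem integrable_hfac {c : ι → ℝ} (hc : ∀ k, 0 < c k) (a b k : ι) :
    Integrable (hfac c a b k) := by
  unfold hfac
  split_ifs
  · simp_rw [Complex.mul_conj, ← Complex.ofReal_mul]
    exact (integrable_normSq_rho1 (hc _)).ofReal
  · simpa using integrable_id_rho1 (hc _)
  · simpa using integrable_conj_rho1 (hc _)
  · simp_rw [one_mul]; exact (integrable_rho1 (hc _)).ofReal

theorem integral_hfac {c : ι → ℝ} (hc : ∀ k, 0 < c k) (a b k : ι) :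
    ∫ z, hfac c a b k z = if k = a then (if k = b then (2 * c a : ℂ) else 0) else
      if k = b then 0 else 1 := by
  unfold hfac
  split_ifs with h1 h2 h2
  · subst h1
    simp_rw [Complex.mul_conj, ← Complex.ofReal_mul]
    rw [integral_complex_ofReal, integral_normSq_rho1 (hc _)]; simp
  · simpa using integral_id_rho1
  · simpa using integral_conj_rho1
  · simp_rw [one_mul]
    rw [integral_complex_ofReal, integral_rho1 (hc _)]; simp

def rhoRow (c : ι → ℝ) (x : ι → ℂ) : ℝ := ∏ k, rho1 (c k) (x k)

theorem rhoRow_nonneg {c : ι → ℝ} (hc : ∀ k, 0 < c k) (x : ι → ℂ) : 0 ≤ rhoRow c x :=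
  Finset.prod_nonneg fun k _ => rho1_nonneg (hc k) _

theorem continuous_rhoRow (c : ι → ℝ) : Continuous (rhoRow c) :=
  continuous_finsetProd _ fun k _ => (continuous_rho1 (c k)).comp (continuous_apply k)

theorem hfac_prod (c : ι → ℝ) (a b : ι) (x : ι → ℂ) :
    x a * (starRingEnd ℂ) (x b) * (rhoRow c x : ℂ) = ∏ k, hfac c a b k (x k) := by
  unfold hfac rhoRow
  rw [Finset.prod_mul_distrib, Finset.prod_mul_distrib]
  simp

theorem integrable_pair {c : ι → ℝ} (hc : ∀ k, 0 < c k) (a b : ι) :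
    Integrable (fun x : ι → ℂ => x a * (starRingEnd ℂ) (x b) * (rhoRow c x : ℂ)) := by
  simp_rw [hfac_prod]
  exact Integrable.fintype_prod (fun k => integrable_hfac hc a b k)

theorem integral_pair {c : ι → ℝ} (hc : ∀ k, 0 < c k) (a b : ι) :
    ∫ x : ι → ℂ, x a * (starRingEnd ℂ) (x b) * (rhoRow c x : ℂ) =
      if a = b then (2 * c a : ℂ) else 0 := by
  simp_rw [hfac_prod]
  rw [integral_fintype_prod_volume_eq_prod]
  simp_rw [integral_hfac hc]
  by_cases h : a = b
  · subst h
    rw [if_pos rfl]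
    rw [Finset.prod_eq_single a]
    · simp
    · intro k _ hk; simp [hk]
    · simp
  · rw [if_neg h]
    exact Finset.prod_eq_zero (Finset.mem_univ a) (by simp [h])

theorem row_expand (c : ι → ℝ) (r s : ι → ℂ) (x : ι → ℂ) :
    (∑ a, x a * r a) * (starRingEnd ℂ) (∑ b, x b * s b) * (rhoRow c x : ℂ)
     = ∑ a, ∑ b, (r a * (starRingEnd ℂ) (s b)) * (x a * (starRingEnd ℂ) (x b) * (rhoRow c x : ℂ)) := by
  rw [map_sum, Finset.sum_mul_sum, Finset.sum_mul]
  refine Finset.sum_congr rfl fun a _ => ?_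
  rw [Finset.sum_mul]
  refine Finset.sum_congr rfl fun b _ => ?_
  rw [map_mul]; ring

theorem integrable_rowpair {c : ι → ℝ} (hc : ∀ k, 0 < c k) (r s : ι → ℂ) :
    Integrable (fun x : ι → ℂ =>
      (∑ a, x a * r a) * (starRingEnd ℂ) (∑ b, x b * s b) * (rhoRow c x : ℂ)) := by
  simp_rw [row_expand]
  exact integrable_finsetSum _ fun a _ => integrable_finsetSum _ fun b _ =>
    (integrable_pair hc a b).const_mul _

theorem integral_rowpair {c : ι → ℝ} (hc : ∀ k, 0 < c k) (r s : ι → ℂ) :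
    ∫ x : ι → ℂ, (∑ a, x a * r a) * (starRingEnd ℂ) (∑ b, x b * s b) * (rhoRow c x : ℂ)
      = ∑ a, 2 * c a * r a * (starRingEnd ℂ) (s a) := by
  simp_rw [row_expand]
  rw [integral_finsetSum _ fun a _ => integrable_finsetSum _ fun b _ =>
    (integrable_pair hc a b).const_mul _]
  refine Finset.sum_congr rfl fun a _ => ?_
  rw [integral_finsetSum _ fun b _ => (integrable_pair hc a b).const_mul _]
  simp_rw [integral_const_mul, integral_pair hc]
  simp
  ring

variable {n : ℕ}

theorem sum_perm_perm (S : Matrix (Fin n) (Fin n) ℂ) :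
    ∑ σ : Equiv.Perm (Fin n), ∑ τ : Equiv.Perm (Fin n),
      ((Equiv.Perm.sign σ : ℤ) : ℂ) * ((Equiv.Perm.sign τ : ℤ) : ℂ) * ∏ i, S (σ i) (τ i)
      = (n.factorial : ℂ) * S.det := by
  have : ∀ σ : Equiv.Perm (Fin n), ∑ τ : Equiv.Perm (Fin n),
      ((Equiv.Perm.sign σ : ℤ) : ℂ) * ((Equiv.Perm.sign τ : ℤ) : ℂ) * ∏ i, S (σ i) (τ i) = S.det := by
    intro σ
    have h1 := Matrix.det_permute σ S
    rw [← Matrix.det_transpose, Matrix.det_apply'] at h1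
    simp only [Matrix.transpose_apply, Matrix.submatrix_apply, id] at h1
    simp_rw [mul_assoc]
    rw [← Finset.mul_sum, h1, ← mul_assoc, ← Int.cast_mul, ← Units.val_mul, Int.units_mul_self]
    simp
  simp_rw [this]
  simp [Fintype.card_perm]

/-- `D(F)_{ij} = ∑ₐ F i a R a j`. -/
def DR (R : ι → Fin n → ℂ) (F : Fin n → ι → ℂ) : Matrix (Fin n) (Fin n) ℂ :=
  Matrix.of fun i j => ∑ a, F i a * R a j

def covR (c : ι → ℝ) (R : ι → Fin n → ℂ) : Matrix (Fin n) (Fin n) ℂ :=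
  Matrix.of fun j k => ∑ a, 2 * c a * R a j * (starRingEnd ℂ) (R a k)

def rhoF (c : ι → ℝ) (F : Fin n → ι → ℂ) : ℝ := ∏ i, rhoRow c (F i)

theorem rhoF_nonneg {c : ι → ℝ} (hc : ∀ k, 0 < c k) (x : Fin n → ι → ℂ) : 0 ≤ rhoF c x :=
  Finset.prod_nonneg fun k _ => rhoRow_nonneg hc _

theorem continuous_rhoF (c : ι → ℝ) : Continuous (rhoF (n := n) c) :=
  continuous_finsetProd _ fun k _ => (continuous_rhoRow c).comp (continuous_apply k)

theorem det_expand (c : ι → ℝ) (R : ι → Fin n → ℂ) (F : Fin n → ι → ℂ) :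
    ((Complex.normSq (DR R F).det * rhoF c F : ℝ) : ℂ) =
    ∑ σ : Equiv.Perm (Fin n), ∑ τ : Equiv.Perm (Fin n),
      ((Equiv.Perm.sign σ : ℤ) : ℂ) * ((Equiv.Perm.sign τ : ℤ) : ℂ) *
      ∏ i, ((∑ a, F i a * R a (σ i)) * (starRingEnd ℂ) (∑ a, F i a * R a (τ i)) *
        (rhoRow c (F i) : ℂ)) := by
  rw [Complex.ofReal_mul, ← Complex.mul_conj, ← Matrix.det_transpose, Matrix.det_apply', map_sum,
    Finset.sum_mul_sum, Finset.sum_mul]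
  refine Finset.sum_congr rfl fun σ _ => ?_
  rw [Finset.sum_mul]
  refine Finset.sum_congr rfl fun τ _ => ?_
  simp only [Matrix.transpose_apply, DR, Matrix.of_apply, rhoF, Finset.prod_mul_distrib, map_mul,
    map_prod, Complex.ofReal_prod, map_intCast]
  ring

theorem integrable_det {c : ι → ℝ} (hc : ∀ k, 0 < c k) (R : ι → Fin n → ℂ) :
    Integrable (fun F : Fin n → ι → ℂ => ((Complex.normSq (DR R F).det * rhoF c F : ℝ) : ℂ)) := by
  simp_rw [det_expand]
  refine integrable_finsetSum _ fun σ _ => integrable_finsetSum _ fun τ _ =>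
    Integrable.const_mul ?_ _
  exact Integrable.fintype_prod (f := fun i (x : ι → ℂ) =>
    (∑ a, x a * R a (σ i)) * (starRingEnd ℂ) (∑ a, x a * R a (τ i)) * (rhoRow c x : ℂ))
    (fun i => integrable_rowpair hc (fun a => R a (σ i)) (fun a => R a (τ i)))

theorem integral_det {c : ι → ℝ} (hc : ∀ k, 0 < c k) (R : ι → Fin n → ℂ) :
    ∫ F : Fin n → ι → ℂ, ((Complex.normSq (DR R F).det * rhoF c F : ℝ) : ℂ)
      = (n.factorial : ℂ) * (covR c R).det := by
  simp_rw [det_expand]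
  have hi : ∀ σ τ : Equiv.Perm (Fin n), Integrable (fun F : Fin n → ι → ℂ =>
      ∏ i, ((∑ a, F i a * R a (σ i)) * (starRingEnd ℂ) (∑ a, F i a * R a (τ i)) *
        (rhoRow c (F i) : ℂ))) := fun σ τ =>
    Integrable.fintype_prod (f := fun i (x : ι → ℂ) =>
    (∑ a, x a * R a (σ i)) * (starRingEnd ℂ) (∑ a, x a * R a (τ i)) * (rhoRow c x : ℂ))
    (fun i => integrable_rowpair hc (fun a => R a (σ i)) (fun a => R a (τ i)))
  rw [integral_finsetSum _ fun σ _ => integrable_finsetSum _ fun τ _ => (hi σ τ).const_mul _,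
    ← sum_perm_perm]
  refine Finset.sum_congr rfl fun σ _ => ?_
  rw [integral_finsetSum _ fun τ _ => (hi σ τ).const_mul _]
  refine Finset.sum_congr rfl fun τ _ => ?_
  rw [integral_const_mul]
  congr 1
  rw [integral_fintype_prod_volume_eq_prod (f := fun i (x : ι → ℂ) =>
    (∑ a, x a * R a (σ i)) * (starRingEnd ℂ) (∑ a, x a * R a (τ i)) * (rhoRow c x : ℂ))]
  refine Finset.prod_congr rfl fun i _ => ?_
  rw [integral_rowpair hc (fun a => R a (σ i)) (fun a => R a (τ i))]
  rfl

theorem lintegral_det {c : ι → ℝ} (hc : ∀ k, 0 < c k) (R : ι → Fin n → ℂ) :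
    ∫⁻ F : Fin n → ι → ℂ, ENNReal.ofReal (Complex.normSq (DR R F).det * rhoF c F)
      = ENNReal.ofReal ((n.factorial : ℂ) * (covR c R).det).re := by
  have h1 := integrable_det hc R
  have h2 : Integrable (fun F : Fin n → ι → ℂ => (Complex.normSq (DR R F).det * rhoF c F : ℝ)) := by
    simpa using h1.re
  rw [← integral_det hc R, integral_complex_ofReal, Complex.ofReal_re,
    ofReal_integral_eq_lintegral_ofReal h2]
  exact Filter.Eventually.of_forall fun F =>
    mul_nonneg (Complex.normSq_nonneg _) (rhoF_nonneg hc F)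
end SparseRandom
end

section
open MeasureTheory Finset
open scoped ENNReal Pointwise
namespace SparseRandom
set_option linter.unusedSectionVars false
set_option linter.unusedVariables false

variable {n : ℕ} {ι : Type*} [Fintype ι]

def lin (a p : Fin n → ℝ) : ℝ := ∑ j, a j * p j

def linL (a : Fin n → ℝ) : (Fin n → ℝ) →L[ℝ] ℝ :=
  ∑ j, a j • (ContinuousLinearMap.proj (R := ℝ) (φ := fun _ : Fin n => ℝ) j)

theorem linL_apply (a p : Fin n → ℝ) : linL a p = lin a p := by
  simp [linL, lin]

theorem lin_sub (a b p : Fin n → ℝ) : lin (a - b) p = lin a p - lin b p := by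
  simp [lin, sub_mul, Finset.sum_sub_distrib]

theorem lin_sub_right (a b p : Fin n → ℝ) : lin p (a - b) = lin p a - lin p b := by
  simp [lin, mul_sub, Finset.sum_sub_distrib]

theorem lin_comm (a b : Fin n → ℝ) : lin a b = lin b a := by
  simp [lin, mul_comm]

/-- `c_k e^{2⟨α_k,p⟩}` -/
def ew (α : ι → Fin n → ℝ) (c : ι → ℝ) (p : Fin n → ℝ) (k : ι) : ℝ :=
  c k * Real.exp (2 * lin (α k) p)

def Kp (α : ι → Fin n → ℝ) (c : ι → ℝ) (p : Fin n → ℝ) : ℝ := ∑ k, ew α c p k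

def mm (α : ι → Fin n → ℝ) (c : ι → ℝ) (p : Fin n → ℝ) (j : Fin n) : ℝ :=
  (∑ k, ew α c p k * α k j) / Kp α c p

def Cov (α : ι → Fin n → ℝ) (c : ι → ℝ) (p : Fin n → ℝ) : Matrix (Fin n) (Fin n) ℝ :=
  Matrix.of fun j l => (∑ k, ew α c p k * (α k j - mm α c p j) * (α k l - mm α c p l)) / Kp α c p

variable (α : ι → Fin n → ℝ) {c : ι → ℝ}

theorem ew_pos (hc : ∀ k, 0 < c k) (p : Fin n → ℝ) (k : ι) : 0 < ew α c p k := mul_pos (hc k) (Real.exp_pos _)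

theorem Kp_pos (hc : ∀ k, 0 < c k) [Nonempty ι] (p : Fin n → ℝ) : 0 < Kp α c p :=
  Finset.sum_pos (fun k _ => ew_pos α hc p k) Finset.univ_nonempty

theorem sum_centered (hc : ∀ k, 0 < c k) [Nonempty ι] (p : Fin n → ℝ) (j : Fin n) :
    ∑ k, ew α c p k * (α k j - mm α c p j) = 0 := by
  simp_rw [mul_sub, Finset.sum_sub_distrib, ← Finset.sum_mul]
  have := (Kp_pos α hc p).ne'
  unfold mm
  rw [← Kp]; field_simp; ring

theorem Cov_det_nonneg (hc : ∀ k, 0 < c k) [Nonempty ι] (p : Fin n → ℝ) : 0 ≤ (Cov α c p).det := by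
  classical
  let R : Matrix ι (Fin n) ℝ := Matrix.of fun k j =>
    Real.sqrt (ew α c p k / Kp α c p) * (α k j - mm α c p j)
  have : Cov α c p = R.conjTranspose * R := by
    ext j l
    simp only [Cov, R, Matrix.mul_apply, Matrix.of_apply, Matrix.conjTranspose_apply, star_trivial]
    rw [Finset.sum_div]
    refine Finset.sum_congr rfl fun k _ => ?_
    have h := Real.mul_self_sqrt (div_pos (ew_pos α hc p k) (Kp_pos α hc p)).le
    linear_combination (-(α k j - mm α c p j) * (α k l - mm α c p l)) * h
  rw [this]
  exact (Matrix.posSemidef_conjTranspose_mul_self R).det_nonneg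

theorem Cov_mulVec (hc : ∀ k, 0 < c k) [Nonempty ι] (p v : Fin n → ℝ) (j : Fin n) :
    (Cov α c p).mulVec v j = (∑ k, ew α c p k * (α k j - mm α c p j) * lin (α k) v) / Kp α c p := by
  have h := sum_centered α hc p j
  have h2 : ∑ l, Cov α c p j l * v l
     = (∑ k, ew α c p k * (α k j - mm α c p j) * (lin (α k) v - lin (mm α c p) v)) / Kp α c p := by
    simp only [Cov, Matrix.of_apply, div_mul_eq_mul_div, Finset.sum_mul]
    rw [← Finset.sum_div, Finset.sum_comm]
    congr 1
    refine Finset.sum_congr rfl fun k _ => ?_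
    rw [← lin_sub, lin, Finset.mul_sum]
    refine Finset.sum_congr rfl fun l _ => ?_
    simp only [Pi.sub_apply]; ring
  rw [Matrix.mulVec, dotProduct, h2]
  congr 1
  rw [← sub_eq_zero, ← Finset.sum_sub_distrib]
  trans ∑ k, (ew α c p k * (α k j - mm α c p j)) * (-lin (mm α c p) v)
  · exact Finset.sum_congr rfl fun k _ => by ring
  · rw [← Finset.sum_mul, h, zero_mul]

theorem hasFDerivAt_ew (hc : ∀ k, 0 < c k) (p : Fin n → ℝ) (k : ι) :
    HasFDerivAt (fun p => ew α c p k) ((2 * ew α c p k) • linL (α k)) p := by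
  have h1 : HasFDerivAt (fun p => lin (α k) p) (linL (α k)) p := by
    have := (linL (α k)).hasFDerivAt (x := p)
    simpa [funext (linL_apply (α k))] using this
  have h2 := ((h1.const_mul 2).exp).const_mul (c k)
  convert! h2 using 1
  ext v
  simp [ew]; ring

theorem hasFDerivAt_mm (hc : ∀ k, 0 < c k) [Nonempty ι] (p : Fin n → ℝ) :
    HasFDerivAt (mm α c) (Matrix.toLin' ((2 : ℝ) • Cov α c p)).toContinuousLinearMap p := by
  rw [hasFDerivAt_pi']
  intro j
  have hN : HasFDerivAt (fun p => ∑ k, ew α c p k * α k j)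
      (∑ k, α k j • ((2 * ew α c p k) • linL (α k))) p := by
    refine HasFDerivAt.fun_sum fun k _ => ?_
    exact (hasFDerivAt_ew α hc p k).mul_const (α k j)
  have hK : HasFDerivAt (fun p => Kp α c p) (∑ k, ((2 * ew α c p k) • linL (α k))) p :=
    HasFDerivAt.fun_sum fun k _ => hasFDerivAt_ew α hc p k
  have hne := (Kp_pos α hc p).ne'
  have h := hN.fun_mul ((hasDerivAt_inv hne).comp_hasFDerivAt p hK)
  have hfun : (fun x => mm α c x j)
      = fun y => (∑ k, ew α c y k * α k j) * ((fun x => x⁻¹) ∘ fun p => Kp α c p) y := by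
    ext y; simp [mm, div_eq_mul_inv]
  rw [hfun]
  refine h.congr_fderiv ?_
  ext1 v
  have e1 : ((ContinuousLinearMap.proj (R := ℝ) (φ := fun _ : Fin n => ℝ) j).comp
      (Matrix.toLin' ((2 : ℝ) • Cov α c p)).toContinuousLinearMap) v
      = 2 * (Cov α c p).mulVec v j := by
    simp [Matrix.smul_mulVec]
  rw [e1, Cov_mulVec α hc]
  have e2 : ∑ k, ew α c p k * (α k j - mm α c p j) * lin (α k) v
      = (∑ k, α k j * (ew α c p k * lin (α k) v))
        - mm α c p j * ∑ k, ew α c p k * lin (α k) v := by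
    rw [Finset.mul_sum, ← Finset.sum_sub_distrib]
    exact Finset.sum_congr rfl fun k _ => by ring
  have e3 : (∑ k, ((2 * ew α c p k) • linL (α k))) v = 2 * ∑ k, ew α c p k * lin (α k) v := by
    simp [linL_apply, Finset.mul_sum, mul_assoc]
  have e4 : (∑ k, α k j • ((2 * ew α c p k) • linL (α k))) v
      = 2 * ∑ k, α k j * (ew α c p k * lin (α k) v) := by
    simp only [_root_.sum_apply, _root_.smul_apply, smul_eq_mul, linL_apply, Finset.mul_sum]
    exact Finset.sum_congr rfl fun k _ => by ring
  rw [e2]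
  simp only [_root_.smul_apply, _root_.add_apply, e3, e4, smul_eq_mul, Function.comp]
  unfold mm
  field_simp
  ring

theorem mm_injective (hc : ∀ k, 0 < c k) [Nonempty ι]
    (hnd : ∀ v : Fin n → ℝ, (∀ k l, lin (α k) v = lin (α l) v) → v = 0) :
    Function.Injective (mm α c) := by
  intro p p' h
  set v := p' - p with hv
  set x : ι → ℝ := fun k => lin (α k) v
  set xb : ℝ := lin (mm α c p) v with hxb
  have hx : ∀ k, lin (α k) p' = lin (α k) p + x k := by
    intro k; simp only [x, hv, lin_sub_right]; ring
  have s1 : ∀ q : Fin n → ℝ, ∑ k, ew α c q k * (x k - lin (mm α c q) v) = 0 := by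
    intro q
    have : ∀ k, ew α c q k * (x k - lin (mm α c q) v)
        = ∑ j, (ew α c q k * (α k j - mm α c q j)) * v j := by
      intro k
      simp only [x]; rw [← lin_sub, lin, Finset.mul_sum]
      exact Finset.sum_congr rfl fun j _ => by simp only [Pi.sub_apply]; ring
    simp_rw [this]
    rw [Finset.sum_comm]
    simp_rw [← Finset.sum_mul, sum_centered α hc q]
    simp
  have s2 := s1 p
  have s3 := s1 p'
  rw [← h, ← hxb] at s3
  rw [← hxb] at s2
  have e3 : ∀ k, ew α c p' k = ew α c p k * Real.exp (2 * x k) := by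
    intro k
    unfold ew
    rw [hx, mul_assoc, ← Real.exp_add]; ring_nf
  have s4 : ∑ k, ew α c p k * ((x k - xb) * (Real.exp (2 * x k) - Real.exp (2 * xb))) = 0 := by
    have : ∀ k, ew α c p k * ((x k - xb) * (Real.exp (2 * x k) - Real.exp (2 * xb)))
       = ew α c p' k * (x k - xb) - Real.exp (2 * xb) * (ew α c p k * (x k - xb)) := by
      intro k; rw [e3]; ring
    simp_rw [this]
    rw [Finset.sum_sub_distrib, ← Finset.mul_sum, s2, s3]; ring
  have hnn : ∀ k, 0 ≤ (x k - xb) * (Real.exp (2 * x k) - Real.exp (2 * xb)) := by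
    intro k
    rcases le_total (x k) xb with h | h
    · exact mul_nonneg_of_nonpos_of_nonpos (by linarith)
        (by linarith [Real.exp_le_exp.2 (by linarith : 2 * x k ≤ 2 * xb)])
    · exact mul_nonneg (by linarith)
        (by linarith [Real.exp_le_exp.2 (by linarith : 2 * xb ≤ 2 * x k)])
  have hz := (Finset.sum_eq_zero_iff_of_nonneg
    (fun k _ => mul_nonneg (ew_pos α hc p k).le (hnn k))).1 s4
  have hxk : ∀ k, x k = xb := by
    intro k
    have h0 := hz k (Finset.mem_univ k)
    rcases mul_eq_zero.1 h0 with h | h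
    · exact absurd h (ew_pos α hc p k).ne'
    rcases mul_eq_zero.1 h with h | h
    · linarith
    · have : Real.exp (2 * x k) = Real.exp (2 * xb) := by linarith
      have := Real.exp_injective this
      linarith
  have : v = 0 := hnd v fun k l => (hxk k).trans (hxk l).symm
  have : p' = p := sub_eq_zero.1 this
  exact this.symm

theorem mm_mem_hull (hc : ∀ k, 0 < c k) [Nonempty ι] (p : Fin n → ℝ) : mm α c p ∈ convexHull ℝ (Set.range α) := by
  have hK := Kp_pos α hc p
  have : mm α c p = ∑ k, (ew α c p k / Kp α c p) • α k := by
    ext j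
    simp [mm, Finset.sum_div, div_mul_eq_mul_div]
  rw [this]
  refine (convex_convexHull ℝ _).sum_mem (fun k _ => (div_pos (ew_pos α hc p k) hK).le) ?_
    (fun k _ => subset_convexHull ℝ _ ⟨k, rfl⟩)
  rw [← Finset.sum_div, ← Kp, div_self hK.ne']

theorem interior_subset_range (hc : ∀ k, 0 < c k) [Nonempty ι] :
    interior (convexHull ℝ (Set.range α)) ⊆ Set.range (mm α c) := by
  intro x hx
  obtain ⟨ε, hε, hball⟩ := Metric.isOpen_iff.1 isOpen_interior x hx
  obtain ⟨δ, hδ, hδε⟩ : ∃ δ, 0 < δ ∧ δ < ε := ⟨ε / 2, by linarith, by linarith⟩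
  set β : ι → Fin n → ℝ := fun k => α k - x
  set φ : (Fin n → ℝ) → ℝ := Kp β c with hφ
  have hder : ∀ p, HasFDerivAt φ (∑ k, ((2 * ew β c p k) • linL (β k))) p := fun p =>
    HasFDerivAt.fun_sum fun k _ => hasFDerivAt_ew β hc p k
  have hcont : Continuous φ := continuous_iff_continuousAt.2 fun p => (hder p).continuousAt
  obtain ⟨k0, -, hk0⟩ := Finset.exists_min_image Finset.univ c Finset.univ_nonempty
  have hbig : ∀ p, ∃ k, δ * ‖p‖ ≤ lin (β k) p := by
    intro p
    by_contra! hcon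
    set s : Fin n → ℝ := fun j => SignType.sign (p j)
    have hy : x + δ • s ∈ convexHull ℝ (Set.range α) := by
      refine interior_subset (hball ?_)
      rw [Metric.mem_ball, dist_eq_norm, add_sub_cancel_left]
      refine lt_of_le_of_lt ?_ hδε
      rw [pi_norm_le_iff_of_nonneg hδ.le]
      intro j
      simp only [Pi.smul_apply, smul_eq_mul, s, norm_mul, Real.norm_eq_abs, abs_of_pos hδ]
      have : |((SignType.sign (p j) : SignType) : ℝ)| ≤ 1 := by
        rcases lt_trichotomy (p j) 0 with h | h | h
        · simp [h]
        · simp [h]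
        · simp [h]
      nlinarith
    have hsub : convexHull ℝ (Set.range α) ⊆ {y | linL p y < δ * ‖p‖ + lin x p} := by
      refine convexHull_min ?_ (convex_halfSpace_lt (linL p).toLinearMap.isLinear _)
      rintro _ ⟨k, rfl⟩
      have := hcon k
      simp only [β, lin_sub] at this
      simp only [Set.mem_ofPred_eq, linL_apply, lin_comm p]
      linarith
    have h1 := hsub hy
    have h1' : linL p (x + δ • s) < δ * ‖p‖ + lin x p := h1
    rw [map_add, map_smul, smul_eq_mul, linL_apply, linL_apply, lin_comm p, lin_comm p] at h1'
    have h2 : ‖p‖ ≤ lin s p := by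
      have : lin s p = ∑ j, |p j| := by
        simp only [lin, s]
        exact Finset.sum_congr rfl fun j _ => by rw [sign_mul_self]
      rw [this, pi_norm_le_iff_of_nonneg (Finset.sum_nonneg fun j _ => abs_nonneg _)]
      intro j
      exact Finset.single_le_sum (f := fun j => |p j|) (fun j _ => abs_nonneg _) (Finset.mem_univ j)
    nlinarith
  have hlow : ∀ p, c k0 * (2 * δ * ‖p‖) ≤ φ p := by
    intro p
    obtain ⟨k, hk⟩ := hbig p
    have h1 : ew β c p k ≤ φ p :=
      Finset.single_le_sum (f := ew β c p) (fun k _ => (ew_pos β hc p k).le) (Finset.mem_univ k)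
    refine le_trans ?_ h1
    unfold ew
    have h2 : 2 * δ * ‖p‖ ≤ Real.exp (2 * lin (β k) p) := by
      linarith [Real.add_one_le_exp (2 * lin (β k) p)]
    have h3 : 0 ≤ 2 * δ * ‖p‖ := by positivity
    exact mul_le_mul (hk0 k (Finset.mem_univ k)) h2 h3 (hc k).le
  have htend : Filter.Tendsto φ (Filter.cocompact _) Filter.atTop := by
    refine Filter.tendsto_atTop_mono hlow ?_
    refine Filter.Tendsto.const_mul_atTop (hc k0) ?_
    exact Filter.Tendsto.const_mul_atTop (by linarith) (tendsto_norm_cocompact_atTop)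
  obtain ⟨p, hp⟩ := hcont.exists_forall_le htend
  have hmin : IsLocalMin φ p := Filter.Eventually.of_forall hp
  have h0 := hmin.hasFDerivAt_eq_zero (hder p)
  refine ⟨p, ?_⟩
  ext j
  have h1 := congrArg (fun L => L (Pi.single j 1)) h0
  simp only [_root_.sum_apply, _root_.smul_apply, linL_apply,
    smul_eq_mul, _root_.zero_apply] at h1
  have h2 : ∀ k, lin (β k) (Pi.single j 1) = α k j - x j := by
    intro k; simp [lin, β, Pi.single_apply]
  simp_rw [h2] at h1
  have h3 : ∀ k, ew β c p k = ew α c p k * Real.exp (-2 * lin x p) := by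
    intro k; simp only [ew, β, lin_sub]; rw [mul_assoc, ← Real.exp_add]; ring_nf
  have h4 : (2 * Real.exp (-2 * lin x p)) * ∑ k, ew α c p k * (α k j - x j) = 0 := by
    rw [← h1, Finset.mul_sum]
    exact Finset.sum_congr rfl fun k _ => by rw [h3]; ring
  have h5 : ∑ k, ew α c p k * (α k j - x j) = 0 := by
    rcases mul_eq_zero.1 h4 with h | h
    · exact absurd h (by positivity)
    · exact h
  simp_rw [mul_sub, Finset.sum_sub_distrib, ← Finset.sum_mul] at h5
  have hK := (Kp_pos α hc p).ne'
  unfold mm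
  rw [div_eq_iff hK]
  rw [← Kp] at h5
  linarith

theorem lintegral_Cov_nondeg (hc : ∀ k, 0 < c k) [Nonempty ι]
    (hnd : ∀ v : Fin n → ℝ, (∀ k l, lin (α k) v = lin (α l) v) → v = 0) :
    ∫⁻ p, ENNReal.ofReal ((2:ℝ) • Cov α c p).det = volume (convexHull ℝ (Set.range α)) := by
  have h := lintegral_abs_det_fderiv_eq_addHaar_image volume MeasurableSet.univ
    (fun p _ => (hasFDerivAt_mm α hc p).hasFDerivWithinAt) (mm_injective α hc hnd).injOn
  have e : ∀ p, |((Matrix.toLin' ((2 : ℝ) • Cov α c p)).toContinuousLinearMap).det|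
      = ((2:ℝ) • Cov α c p).det := by
    intro p
    rw [ContinuousLinearMap.det]
    simp only [LinearMap.coe_toContinuousLinearMap, LinearMap.det_toLin']
    rw [abs_of_nonneg]
    rw [Matrix.det_smul]
    exact mul_nonneg (by positivity) (Cov_det_nonneg α hc p)
  simp_rw [e] at h
  rw [Measure.restrict_univ, Set.image_univ] at h
  rw [h]
  refine le_antisymm (measure_mono (by rintro _ ⟨p, rfl⟩; exact mm_mem_hull α hc p)) ?_
  calc volume (convexHull ℝ (Set.range α))
      ≤ volume (interior (convexHull ℝ (Set.range α)) ∪ frontier (convexHull ℝ (Set.range α))) :=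
        measure_mono (by rw [← closure_eq_interior_union_frontier]; exact subset_closure)
    _ ≤ volume (interior (convexHull ℝ (Set.range α)))
        + volume (frontier (convexHull ℝ (Set.range α))) := measure_union_le _ _
    _ = volume (interior (convexHull ℝ (Set.range α))) := by
        rw [Convex.addHaar_frontier volume (convex_convexHull ℝ _), add_zero]
    _ ≤ _ := measure_mono (interior_subset_range α hc)

theorem lintegral_Cov (hc : ∀ k, 0 < c k) [Nonempty ι] :
    ∫⁻ p, ENNReal.ofReal ((2:ℝ) • Cov α c p).det = volume (convexHull ℝ (Set.range α)) := by
  by_cases hnd : ∀ v : Fin n → ℝ, (∀ k l, lin (α k) v = lin (α l) v) → v = 0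
  · exact lintegral_Cov_nondeg α hc hnd
  push Not at hnd
  obtain ⟨v, hv, hv0⟩ := hnd
  have h1 : ∀ p, ((2:ℝ) • Cov α c p).det = 0 := by
    intro p
    rw [Matrix.det_smul]
    have : (Cov α c p).det = 0 := by
      rw [← Matrix.exists_mulVec_eq_zero_iff]
      refine ⟨v, hv0, ?_⟩
      ext j
      rw [Cov_mulVec α hc]
      obtain ⟨k0⟩ := ‹Nonempty ι›
      simp_rw [fun k => hv k k0, ← Finset.sum_mul]
      have : Nonempty ι := ⟨k0⟩
      rw [sum_centered α hc]; simp
    rw [this, mul_zero]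
  simp_rw [h1]
  simp only [ENNReal.ofReal_zero, lintegral_zero]
  symm
  obtain ⟨k0⟩ := ‹Nonempty ι›
  let L : Submodule ℝ (Fin n → ℝ) := LinearMap.ker (linL v).toLinearMap
  have hL : L ≠ ⊤ := by
    intro h
    have : v ∈ L := h ▸ Submodule.mem_top
    have h2 : lin v v = 0 := by rw [← linL_apply]; exact this
    apply hv0
    ext j
    have := (Finset.sum_eq_zero_iff_of_nonneg (fun j _ => mul_self_nonneg (v j))).1 h2 j (Finset.mem_univ j)
    simpa using this
  have hz : volume ((fun y => -(α k0) + y) ⁻¹' (L : Set (Fin n → ℝ))) = 0 := by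
    rw [measure_preimage_add]
    exact Measure.addHaar_submodule _ L hL
  refine measure_mono_null ?_ hz
  have : ((fun y => -(α k0) + y) ⁻¹' (L : Set (Fin n → ℝ))) = {y | linL v y = lin v (α k0)} := by
    ext y
    simp only [L, Set.mem_preimage, SetLike.mem_coe, LinearMap.mem_ker, Set.mem_ofPred_eq]
    change linL v (-(α k0) + y) = 0 ↔ _
    rw [map_add, map_neg, linL_apply, linL_apply]
    constructor <;> intro h <;> linarith
  rw [this]
  refine convexHull_min ?_ (convex_hyperplane (linL v).toLinearMap.isLinear _)
  rintro _ ⟨k, rfl⟩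
  change linL v (α k) = _
  rw [linL_apply, lin_comm, hv k k0, lin_comm]
end SparseRandom
end

section
open MeasureTheory Finset
open scoped ENNReal Pointwise
namespace SparseRandom
set_option linter.unusedSectionVars false
set_option linter.unusedVariables false

variable {n m : ℕ}

def ev (a : Fin n → ℝ) (w : Fin n → ℂ) : ℂ := Complex.exp (∑ j, (a j : ℂ) * w j)

abbrev EE (n m : ℕ) := (Fin n → ℂ) × (Fin n → Fin m → ℂ)

def beta (α : Fin (m + 1) → Fin n → ℝ) (k : Fin m) : Fin n → ℝ := α k.succ - α 0

def Phi (β : Fin m → Fin n → ℝ) (w : Fin n → ℂ) (g : Fin n → Fin m → ℂ) (i : Fin n) : ℂ :=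
  -∑ k, g i k * ev (β k) w

def Psi (β : Fin m → Fin n → ℝ) (x : EE n m) : EE n m := (Phi β x.1 x.2, x.2)

def JPhi (β : Fin m → Fin n → ℝ) (w : Fin n → ℂ) (g : Fin n → Fin m → ℂ) :
    Matrix (Fin n) (Fin n) ℂ :=
  Matrix.of fun i j => -∑ k, g i k * (β k j : ℂ) * ev (β k) w

/-- linear in `δg` part -/
def BL (β : Fin m → Fin n → ℝ) (w : Fin n → ℂ) : (Fin n → Fin m → ℂ) →ₗ[ℂ] (Fin n → ℂ) where
  toFun g := Phi β w g
  map_add' x y := by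
    ext i; simp [Phi, add_mul, Finset.sum_add_distrib]; ring
  map_smul' r x := by
    ext i; simp [Phi, Finset.mul_sum, mul_assoc]

def PsiL (β : Fin m → Fin n → ℝ) (x : EE n m) : EE n m →ₗ[ℂ] EE n m :=
  LinearMap.prod
    ((Matrix.toLin' (JPhi β x.1 x.2)).comp (LinearMap.fst ℂ _ _) +
      (BL β x.1).comp (LinearMap.snd ℂ _ _))
    (LinearMap.snd ℂ _ _)

theorem PsiL_apply (β : Fin m → Fin n → ℝ) (x y : EE n m) :
    PsiL β x y = ((JPhi β x.1 x.2).mulVec y.1 + Phi β x.1 y.2, y.2) := rfl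

theorem PsiL_det (β : Fin m → Fin n → ℝ) (x : EE n m) :
    LinearMap.det (PsiL β x) = (JPhi β x.1 x.2).det := by
  classical
  let b := Pi.basisFun ℂ (Fin n)
  let b' := Module.Free.chooseBasis ℂ (Fin n → Fin m → ℂ)
  rw [← LinearMap.det_toMatrix (b.prod b')]
  have : LinearMap.toMatrix (b.prod b') (b.prod b') (PsiL β x) =
      Matrix.fromBlocks (JPhi β x.1 x.2) (LinearMap.toMatrix b' b (BL β x.1)) 0 1 := by
    ext i j
    rcases i with i | i <;> rcases j with j | j
    · simp [LinearMap.toMatrix_apply, PsiL_apply, b, Phi]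
    · simp [LinearMap.toMatrix_apply, PsiL_apply, b, BL]
    · simp [LinearMap.toMatrix_apply, PsiL_apply, b]
    · simp [LinearMap.toMatrix_apply, PsiL_apply, b, Matrix.one_apply, Finsupp.single_apply, eq_comm]
  rw [this, Matrix.det_fromBlocks_zero₂₁]; simp

theorem hasFDerivAt_Psi (β : Fin m → Fin n → ℝ) (x : EE n m) :
    HasFDerivAt (𝕜 := ℂ) (Psi β) (PsiL β x).toContinuousLinearMap x := by
  have hg : ∀ i k, HasFDerivAt (𝕜 := ℂ) (fun y : EE n m => y.2 i k)
      ((ContinuousLinearMap.proj (R := ℂ) (φ := fun _ : Fin m => ℂ) k).comp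
        ((ContinuousLinearMap.proj (R := ℂ) (φ := fun _ : Fin n => (Fin m → ℂ)) i).comp
          (ContinuousLinearMap.snd ℂ (Fin n → ℂ) (Fin n → Fin m → ℂ)))) x := fun i k =>
    ContinuousLinearMap.hasFDerivAt
      ((ContinuousLinearMap.proj (R := ℂ) (φ := fun _ : Fin m => ℂ) k).comp
        ((ContinuousLinearMap.proj (R := ℂ) (φ := fun _ : Fin n => (Fin m → ℂ)) i).comp
          (ContinuousLinearMap.snd ℂ (Fin n → ℂ) (Fin n → Fin m → ℂ))))
  have he : ∀ k, HasFDerivAt (𝕜 := ℂ) (fun y : EE n m => ev (β k) y.1)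
      (ev (β k) x.1 • ∑ j, (β k j : ℂ) •
        ((ContinuousLinearMap.proj (R := ℂ) (φ := fun _ : Fin n => ℂ) j).comp
          (ContinuousLinearMap.fst ℂ (Fin n → ℂ) (Fin n → Fin m → ℂ)))) x := by
    intro k
    have h1 : HasFDerivAt (𝕜 := ℂ) (fun y : EE n m => ∑ j, (β k j : ℂ) * y.1 j)
      (∑ j, (β k j : ℂ) •
        ((ContinuousLinearMap.proj (R := ℂ) (φ := fun _ : Fin n => ℂ) j).comp
          (ContinuousLinearMap.fst ℂ (Fin n → ℂ) (Fin n → Fin m → ℂ)))) x := by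
      refine HasFDerivAt.fun_sum fun j _ => ?_
      exact HasFDerivAt.const_mul (ContinuousLinearMap.hasFDerivAt
        ((ContinuousLinearMap.proj (R := ℂ) (φ := fun _ : Fin n => ℂ) j).comp
          (ContinuousLinearMap.fst ℂ (Fin n → ℂ) (Fin n → Fin m → ℂ)))) _
    exact h1.cexp
  have h1 : ∀ i, HasFDerivAt (𝕜 := ℂ) (fun y : EE n m => Phi β y.1 y.2 i) _ x := fun i =>
    (HasFDerivAt.fun_sum (u := Finset.univ) fun k _ => (hg i k).fun_mul (he k)).fun_neg
  have h2 := (hasFDerivAt_pi.2 h1).prodMk (hasFDerivAt_snd (𝕜 := ℂ) (p := x))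
  refine h2.congr_fderiv ?_
  apply ContinuousLinearMap.ext
  intro y
  rw [LinearMap.coe_toContinuousLinearMap', PsiL_apply]
  refine Prod.ext ?_ rfl
  ext i
  simp [Phi, JPhi, Matrix.mulVec, dotProduct, Finset.sum_add_distrib, Finset.mul_sum, Finset.sum_mul]
  rw [Finset.sum_comm, add_comm]
  congr 1
  · refine congrArg Neg.neg (Finset.sum_congr rfl fun j _ => Finset.sum_congr rfl fun k _ => by ring)
  · refine congrArg Neg.neg (Finset.sum_congr rfl fun j _ => by ring)

theorem hasFDerivAt_Psi_real (β : Fin m → Fin n → ℝ) (x : EE n m) :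
    HasFDerivAt (𝕜 := ℝ) (Psi β) ((PsiL β x).toContinuousLinearMap.restrictScalars ℝ) x :=
  (hasFDerivAt_Psi β x).restrictScalars ℝ

theorem det_Psi_real (β : Fin m → Fin n → ℝ) (x : EE n m) :
    ((PsiL β x).toContinuousLinearMap.restrictScalars ℝ).det
      = Complex.normSq (JPhi β x.1 x.2).det := by
  rw [← PsiL_det, ← Algebra.norm_complex_apply, ← LinearMap.det_restrictScalars]
  rfl

theorem continuous_Psi' (β : Fin m → Fin n → ℝ) :
    Continuous fun x : EE n m => (PsiL β x).toContinuousLinearMap.restrictScalars ℝ := by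
  have h1 : (fun x : EE n m => (PsiL β x).toContinuousLinearMap.restrictScalars ℝ)
      = fderiv ℝ (Psi β) := by
    ext1 x; exact (hasFDerivAt_Psi_real β x).fderiv.symm
  rw [h1]
  have : ContDiff ℝ 1 (Psi β) := by
    unfold Psi Phi ev
    have : ∀ a : Fin n → ℝ, ContDiff ℝ 1 fun x : EE n m => ∑ j, (a j : ℂ) * x.1 j := fun a =>
      ContDiff.sum fun j _ => contDiff_const.mul (by fun_prop)
    refine ContDiff.prodMk (contDiff_pi.2 fun i => ContDiff.neg (ContDiff.sum fun k _ => ?_)) contDiff_snd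
    refine ContDiff.mul (by fun_prop) (this _).cexp
  exact this.continuous_fderiv (by norm_num)
end SparseRandom
end

section
open MeasureTheory Finset
open scoped ENNReal Pointwise
namespace SparseRandom
set_option linter.unusedSectionVars false
set_option linter.unusedVariables false

variable {n m : ℕ}

def join (h : Fin n → ℂ) (g : Fin n → Fin m → ℂ) : Fin n → Fin (m + 1) → ℂ :=
  fun i => Fin.cons (h i) (g i)

@[simp] theorem join_zero (h : Fin n → ℂ) (g : Fin n → Fin m → ℂ) (i : Fin n) :
    join h g i 0 = h i := rfl
@[simp] theorem join_succ (h : Fin n → ℂ) (g : Fin n → Fin m → ℂ) (i : Fin n) (k : Fin m) :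
    join h g i k.succ = g i k := rfl

theorem continuous_join : Continuous fun x : EE n m => join x.1 x.2 := by
  refine continuous_pi fun i => continuous_pi fun k => ?_
  refine Fin.cases ?_ (fun k => ?_) k
  · simp; fun_prop
  · simp; fun_prop

def splitE (n m : ℕ) : (Fin n → Fin (m + 1) → ℂ) ≃ᵐ EE n m :=
  (MeasurableEquiv.piCongrRight fun _ : Fin n =>
    MeasurableEquiv.piFinSuccAbove (fun _ : Fin (m + 1) => ℂ) 0).trans
    (MeasurableEquiv.arrowProdEquivProdArrow ℂ (Fin m → ℂ) (Fin n))

theorem splitE_mp : MeasurePreserving (splitE n m) volume volume := by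
  have h1 : MeasurePreserving (MeasurableEquiv.piCongrRight fun _ : Fin n =>
    MeasurableEquiv.piFinSuccAbove (fun _ : Fin (m + 1) => ℂ) 0) volume volume :=
    volume_preserving_pi (fun i => volume_preserving_piFinSuccAbove (fun _ : Fin (m + 1) => ℂ) 0)
  exact (volume_measurePreserving_arrowProdEquivProdArrow ℂ (Fin m → ℂ) (Fin n)).comp h1

theorem join_splitE (F : Fin n → Fin (m + 1) → ℂ) :
    join (splitE n m F).1 (splitE n m F).2 = F := by
  ext i k
  refine Fin.cases ?_ (fun k => ?_) k
  · rfl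
  · rfl

theorem lintegral_split (G : (Fin n → Fin (m + 1) → ℂ) → ℝ≥0∞) :
    ∫⁻ F, G F = ∫⁻ x : EE n m, G (join x.1 x.2) := by
  rw [← splitE_mp.lintegral_comp_emb (splitE n m).measurableEmbedding]
  simp only [join_splitE]

theorem ev_ne (a : Fin n → ℝ) (w : Fin n → ℂ) : ev a w ≠ 0 := Complex.exp_ne_zero _

theorem ev_beta (α : Fin (m + 1) → Fin n → ℝ) (w : Fin n → ℂ) (k : Fin m) :
    ev (beta α k) w * ev (α 0) w = ev (α k.succ) w := by
  unfold ev beta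
  rw [← Complex.exp_add, ← Finset.sum_add_distrib]
  congr 1
  refine Finset.sum_congr rfl fun j _ => ?_
  simp only [Pi.sub_apply]; push_cast; ring

theorem normSq_ev (a : Fin n → ℝ) (w : Fin n → ℂ) :
    Complex.normSq (ev a w) = Real.exp (2 * lin a fun j => (w j).re) := by
  unfold ev lin
  rw [Complex.normSq_eq_norm_sq, Complex.norm_exp, ← Real.exp_nat_mul]
  congr 1
  simp

theorem lintegral_cond (α : Fin (m + 1) → Fin n → ℝ) (w : Fin n → ℂ) (ut : Fin (m + 1) → ℂ)
    (hut : ∑ k, ut k * ev (α k) w = 1) (G : (Fin n → Fin (m + 1) → ℂ) → ℝ≥0∞)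
    (hG : Measurable G) :
    ∫⁻ F, G F = ∫⁻ h : Fin n → ℂ, ∫⁻ g : Fin n → Fin m → ℂ,
      G (fun i k => join (Phi (beta α) w g) g i k + ev (α 0) w * h i * ut k) := by
  have hPc : Continuous fun g : Fin n → Fin m → ℂ => Phi (beta α) w g := by
    unfold Phi; fun_prop
  rw [lintegral_split]
  have hGj : Measurable fun x : EE n m => G (join x.1 x.2) := hG.comp continuous_join.measurable
  rw [show (volume : Measure (EE n m)) = (volume : Measure (Fin n → ℂ)).prod volume from rfl,
    lintegral_prod_symm _ hGj.aemeasurable]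
  have h1 : ∀ g : Fin n → Fin m → ℂ, ∫⁻ h : Fin n → ℂ, G (join h g)
      = ∫⁻ h : Fin n → ℂ, G (join (h + Phi (beta α) w g) g) := fun g =>
    (lintegral_add_right_eq_self (fun h => G (join h g)) _).symm
  simp only [h1]
  rw [lintegral_lintegral_swap]
  · refine lintegral_congr fun h => ?_
    rw [← lintegral_add_right_eq_self _ (fun i k => ev (α 0) w * h i * ut k.succ)]
    refine lintegral_congr fun g => ?_
    congr 1
    ext i k
    refine Fin.cases ?_ (fun k => ?_) k
    · rw [Fin.sum_univ_succ] at hut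
      have h0 : ev (α 0) w * ut 0 = 1 - ev (α 0) w * ∑ k : Fin m, ut k.succ * ev (beta α k) w := by
        rw [eq_sub_iff_add_eq, ← hut, Finset.mul_sum]
        congr 1
        · ring
        · refine Finset.sum_congr rfl fun k _ => ?_
          rw [← ev_beta]; ring
      have h2 : ev (α 0) w * h i * ut 0 = h i * (ev (α 0) w * ut 0) := by ring
      simp only [join_zero, Pi.add_apply, h2, h0, Phi, add_mul, Finset.sum_add_distrib]
      rw [mul_sub, Finset.mul_sum, Finset.mul_sum]
      have : ∑ k : Fin m, ev (α 0) w * h i * ut k.succ * ev (beta α k) w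
        = ∑ k : Fin m, h i * (ev (α 0) w * (ut k.succ * ev (beta α k) w)) :=
        Finset.sum_congr rfl fun k _ => by ring
      rw [this]; ring
    · simp
  · refine (hG.comp (continuous_join.comp (?_ :
      Continuous fun p : (Fin n → Fin m → ℂ) × (Fin n → ℂ) =>
        ((p.2 + Phi (beta α) w p.1, p.1) : EE n m))).measurable).aemeasurable
    exact (continuous_snd.add (hPc.comp continuous_fst)).prodMk continuous_fst
end SparseRandom
end

section
open MeasureTheory Finset
open scoped ENNReal Pointwise
namespace SparseRandom
set_option linter.unusedSectionVars false
set_option linter.unusedVariables false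

variable {n m : ℕ}

/-- real part -/
def reP (w : Fin n → ℂ) : Fin n → ℝ := fun j => (w j).re

def utl (α : Fin (m + 1) → Fin n → ℝ) (c : Fin (m + 1) → ℝ) (w : Fin n → ℂ) (k : Fin (m + 1)) : ℂ :=
  (c k / Kp α c (reP w) : ℝ) * (starRingEnd ℂ) (ev (α k) w)

def RR (α : Fin (m + 1) → Fin n → ℝ) (c : Fin (m + 1) → ℝ) (w : Fin n → ℂ) (k : Fin (m + 1))
    (j : Fin n) : ℂ := ((α k j - mm α c (reP w) j : ℝ) : ℂ) * ev (α k) w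

variable (α : Fin (m + 1) → Fin n → ℝ) {c : Fin (m + 1) → ℝ} (hc : ∀ k, 0 < c k)

theorem utl_mul_ev (w : Fin n → ℂ) (k : Fin (m + 1)) :
    utl α c w k * ev (α k) w = ((ew α c (reP w) k / Kp α c (reP w) : ℝ) : ℂ) := by
  unfold utl
  rw [mul_assoc, mul_comm ((starRingEnd ℂ) _), Complex.mul_conj, normSq_ev, ← Complex.ofReal_mul]
  congr 1
  unfold ew reP
  ring

theorem sum_utl (hc : ∀ k, 0 < c k) (w : Fin n → ℂ) : ∑ k, utl α c w k * ev (α k) w = 1 := by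
  simp only [utl_mul_ev]
  rw [← Complex.ofReal_sum, ← Finset.sum_div, ← Kp, div_self (Kp_pos α hc _).ne']
  simp

theorem sum_join (w : Fin n → ℂ) (g : Fin n → Fin m → ℂ) (i : Fin n) :
    ∑ k, join (Phi (beta α) w g) g i k * ev (α k) w = 0 := by
  rw [Fin.sum_univ_succ]
  simp only [join_zero, join_succ, ← ev_beta, Phi, neg_mul, Finset.sum_mul]
  rw [neg_add_eq_zero]
  exact Finset.sum_congr rfl fun k _ => by ring

theorem DR_RR (hc : ∀ k, 0 < c k) (w : Fin n → ℂ) (g : Fin n → Fin m → ℂ) (h : Fin n → ℂ) :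
    DR (RR α c w) (fun i k => join (Phi (beta α) w g) g i k + ev (α 0) w * h i * utl α c w k)
      = (-ev (α 0) w) • JPhi (beta α) w g := by
  ext i j
  simp only [DR, Matrix.of_apply, Matrix.smul_apply, JPhi, smul_eq_mul, add_mul,
    Finset.sum_add_distrib]
  have h1 : ∑ k, ev (α 0) w * h i * utl α c w k * RR α c w k j = 0 := by
    have : ∀ k, ev (α 0) w * h i * utl α c w k * RR α c w k j
      = ev (α 0) w * h i * ((Kp α c (reP w))⁻¹ : ℝ) *
        ((ew α c (reP w) k * (α k j - mm α c (reP w) j) : ℝ) : ℂ) := by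
      intro k
      have := utl_mul_ev α (c := c) w k
      calc _ = ev (α 0) w * h i * (utl α c w k * ev (α k) w) *
            ((α k j - mm α c (reP w) j : ℝ) : ℂ) := by unfold RR; ring
        _ = _ := by rw [this]; push_cast; ring
    simp only [this]
    rw [← Finset.mul_sum, ← Complex.ofReal_sum, sum_centered α hc]
    simp
  rw [h1, add_zero]
  have h2 : ∀ k, join (Phi (beta α) w g) g i k * RR α c w k j =
      join (Phi (beta α) w g) g i k * ev (α k) w * ((α k j - α 0 j : ℝ) : ℂ)
      + join (Phi (beta α) w g) g i k * ev (α k) w * ((α 0 j - mm α c (reP w) j : ℝ) : ℂ) := by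
    intro k; unfold RR; push_cast; ring
  simp only [h2, Finset.sum_add_distrib]
  rw [← Finset.sum_mul (f := fun k => join (Phi (beta α) w g) g i k * ev (α k) w), sum_join, zero_mul, add_zero, Fin.sum_univ_succ]
  simp only [join_succ, sub_self, Complex.ofReal_zero, mul_zero, zero_add, neg_mul_neg, Finset.mul_sum]
  refine Finset.sum_congr rfl fun k _ => ?_
  rw [← ev_beta]
  simp only [beta, Pi.sub_apply]; push_cast; ring

theorem rhoRow_shift (hc : ∀ k, 0 < c k) (w : Fin n → ℂ) (x : Fin (m + 1) → ℂ) (t : ℂ)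
    (hx : ∑ k, x k * ev (α k) w = 0) :
    rhoRow c (fun k => x k + t * utl α c w k)
      = rhoRow c x * Real.exp (-Complex.normSq t / (2 * Kp α c (reP w))) := by
  have hK := Kp_pos α hc (reP w)
  set K := Kp α c (reP w) with hKd
  unfold rhoRow rho1
  rw [Finset.prod_mul_distrib, Finset.prod_mul_distrib, mul_assoc, ← Real.exp_sum, ← Real.exp_sum,
    ← Real.exp_add]
  congr 2
  have h1 : ∀ k, -Complex.normSq (x k + t * utl α c w k) / (2 * c k)
      = -Complex.normSq (x k) / (2 * c k)
        + (-Complex.normSq t / (2 * K^2)) * ew α c (reP w) k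
        - K⁻¹ * (x k * ev (α k) w * (starRingEnd ℂ) t).re := by
    intro k
    have hck := (hc k).ne'
    have e1 : (starRingEnd ℂ) (t * utl α c w k) = ((c k / K : ℝ) : ℂ) * ((starRingEnd ℂ) t * ev (α k) w) := by
      unfold utl; simp [← hKd]; ring
    have e2 : (x k * (starRingEnd ℂ) (t * utl α c w k)).re
        = c k / K * (x k * ev (α k) w * (starRingEnd ℂ) t).re := by
      rw [e1, ← Complex.re_ofReal_mul]; congr 1; ring
    have e3 : Complex.normSq (t * utl α c w k) = Complex.normSq t * ((c k / K)^2 * (ew α c (reP w) k / c k)) := by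
      have hne : Complex.normSq (ev (α k) w) = Real.exp (2 * lin (α k) (reP w)) := normSq_ev _ _
      unfold utl ew
      rw [Complex.normSq_mul, Complex.normSq_mul, Complex.normSq_conj, hne, Complex.normSq_ofReal]
      rw [← hKd]
      field_simp
    rw [Complex.normSq_add, e2, e3]
    field_simp
    ring
  simp only [h1, Finset.sum_add_distrib, Finset.sum_sub_distrib]
  rw [← Finset.mul_sum, ← Finset.mul_sum, ← Complex.re_sum, ← Finset.sum_mul, hx, ← Kp, ← hKd]
  simp
  field_simp

theorem covR_RR (hc : ∀ k, 0 < c k) (w : Fin n → ℂ) :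
    covR c (RR α c w) = ((2 * Kp α c (reP w)) • Cov α c (reP w)).map Complex.ofReal := by
  have hK := Kp_pos α hc (reP w)
  ext j l
  simp only [covR, Matrix.of_apply, Matrix.map_apply, Matrix.smul_apply, Cov, smul_eq_mul]
  rw [mul_assoc, mul_div_cancel₀ _ hK.ne', Finset.mul_sum, Complex.ofReal_sum]
  refine Finset.sum_congr rfl fun k _ => ?_
  unfold RR
  have : ((c k : ℂ) * (ev (α k) w * (starRingEnd ℂ) (ev (α k) w))) = ew α c (reP w) k := by
    rw [Complex.mul_conj, normSq_ev]; unfold ew reP; push_cast; rfl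
  push_cast
  rw [← this]
  simp only [map_mul, Complex.conj_ofReal, map_sub]
  ring

theorem lintegral_rhoConst {c' : ℝ} (hc' : 0 < c') :
    ∫⁻ h : Fin n → ℂ, ENNReal.ofReal (∏ i, rho1 c' (h i)) = 1 := by
  rw [← ofReal_integral_eq_lintegral_ofReal]
  · rw [integral_fintype_prod_volume_eq_prod (fun _ : Fin n => rho1 c')]
    simp [integral_rho1 hc']
  · exact Integrable.fintype_prod (f := fun _ : Fin n => rho1 c') fun _ => integrable_rho1 hc'
  · exact Filter.Eventually.of_forall fun h => Finset.prod_nonneg fun i _ => rho1_nonneg hc' _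

theorem lintegral_J (hc : ∀ k, 0 < c k) (w : Fin n → ℂ) :
    ∫⁻ g : Fin n → Fin m → ℂ, ENNReal.ofReal (Complex.normSq (JPhi (beta α) w g).det *
      rhoF c (join (Phi (beta α) w g) g))
    = ENNReal.ofReal ((n.factorial : ℝ) * (Cov α c (reP w)).det / Real.pi ^ n) := by
  have hK := Kp_pos α hc (reP w)
  set K := Kp α c (reP w) with hKd
  have hu : 0 < Complex.normSq (ev (α 0) w) := Complex.normSq_pos.2 (ev_ne _ _)
  set U := Complex.normSq (ev (α 0) w) with hU
  have h1 := lintegral_det hc (RR α c w)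
  have hmeas : Measurable fun F : Fin n → Fin (m + 1) → ℂ =>
      ENNReal.ofReal (Complex.normSq (DR (RR α c w) F).det * rhoF c F) := by
    refine (Continuous.mul ?_ (continuous_rhoF c)).measurable.ennreal_ofReal
    refine Complex.continuous_normSq.comp (Continuous.matrix_det ?_)
    refine continuous_matrix fun i j => ?_
    simp only [DR, Matrix.of_apply]
    fun_prop
  rw [lintegral_cond α w (utl α c w) (sum_utl α hc w) _ hmeas] at h1
  have h2 : ∀ (h : Fin n → ℂ) (g : Fin n → Fin m → ℂ),
      ENNReal.ofReal (Complex.normSq (DR (RR α c w) (fun i k => join (Phi (beta α) w g) g i k + ev (α 0) w * h i * utl α c w k)).det * rhoF c (fun i k => join (Phi (beta α) w g) g i k + ev (α 0) w * h i * utl α c w k))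
      = ENNReal.ofReal ((2 * Real.pi * K)^n) * ENNReal.ofReal (∏ i, rho1 (K / U) (h i)) *
        ENNReal.ofReal (Complex.normSq (JPhi (beta α) w g).det *
      rhoF c (join (Phi (beta α) w g) g)) := by
    intro h g
    rw [← ENNReal.ofReal_mul (by positivity), ← ENNReal.ofReal_mul (mul_nonneg (by positivity)
      (Finset.prod_nonneg fun i _ => rho1_nonneg (by positivity) _))]
    congr 1
    rw [DR_RR α hc, Matrix.det_smul, Fintype.card_fin, Complex.normSq_mul, map_pow, Complex.normSq_neg, ← hU]
    have : rhoF c (fun i k => join (Phi (beta α) w g) g i k + ev (α 0) w * h i * utl α c w k)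
      = rhoF c (join (Phi (beta α) w g) g) * ∏ i, ((2 * Real.pi * (K/U)) * rho1 (K/U) (h i)) := by
      unfold rhoF
      rw [← Finset.prod_mul_distrib]
      refine Finset.prod_congr rfl fun i _ => ?_
      rw [rhoRow_shift α hc w _ _ (sum_join α w g i), ← hKd]
      congr 1
      unfold rho1
      rw [Complex.normSq_mul, ← hU, ← mul_assoc, mul_inv_cancel₀ (by positivity), one_mul]
      congr 1
      field_simp
    rw [this, Finset.prod_mul_distrib, Finset.prod_const, Finset.card_univ, Fintype.card_fin]
    have : (2 * Real.pi * K)^n = U^n * (2 * Real.pi * (K/U))^n := by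
      rw [← mul_pow]; congr 1; field_simp
    rw [this]; ring
  simp only [h2] at h1
  have hJm : Measurable fun g : Fin n → Fin m → ℂ => ENNReal.ofReal (Complex.normSq (JPhi (beta α) w g).det *
      rhoF c (join (Phi (beta α) w g) g)) := by
    have hPc : Continuous fun g : Fin n → Fin m → ℂ => Phi (beta α) w g := by
      unfold Phi; fun_prop
    refine (Continuous.mul ?_ ((continuous_rhoF c).comp (continuous_join.comp (hPc.prodMk continuous_id)))).measurable.ennreal_ofReal
    refine Complex.continuous_normSq.comp (Continuous.matrix_det ?_)
    refine continuous_matrix fun i j => ?_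
    simp only [JPhi, Matrix.of_apply]
    fun_prop
  simp_rw [lintegral_const_mul _ hJm] at h1
  rw [lintegral_mul_const'' _ (by
    refine AEMeasurable.const_mul ?_ _
    exact (continuous_finsetProd _ fun i _ => (continuous_rho1 _).comp (continuous_apply i)).measurable.ennreal_ofReal.aemeasurable),
    lintegral_const_mul' _ _ ENNReal.ofReal_ne_top, lintegral_rhoConst (by positivity), mul_one, covR_RR α hc] at h1
  have h3 : ((n.factorial : ℂ) * (((2 * Kp α c (reP w)) • Cov α c (reP w)).map Complex.ofReal).det).re
      = (2 * Real.pi * K)^n * ((n.factorial : ℝ) * (Cov α c (reP w)).det / Real.pi ^ n) := by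
    have : (((2 * Kp α c (reP w)) • Cov α c (reP w)).map Complex.ofReal).det
      = (((2 * Kp α c (reP w)) • Cov α c (reP w)).det : ℂ) :=
      (RingHom.map_det Complex.ofRealHom _).symm
    rw [this, Matrix.det_smul, Fintype.card_fin, ← hKd, ← Complex.ofReal_natCast, ← Complex.ofReal_mul, Complex.ofReal_re]
    have := Real.pi_pos
    rw [mul_pow, mul_pow, mul_pow]; field_simp
  rw [h3, ENNReal.ofReal_mul (by positivity)] at h1
  have := Real.pi_pos
  exact (ENNReal.mul_right_inj (by simp only [ne_eq, ENNReal.ofReal_eq_zero, not_le]; positivity) ENNReal.ofReal_ne_top).1 h1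
end SparseRandom
end

section
open MeasureTheory Finset
open scoped ENNReal Pointwise
namespace SparseRandom
set_option linter.unusedSectionVars false
set_option linter.unusedVariables false

variable {n m : ℕ}

def strip (n : ℕ) : Set (Fin n → ℂ) := {w | ∀ j, (w j).im ∈ Set.Ioc (-Real.pi) Real.pi}

theorem measurableSet_strip : MeasurableSet (strip n) := by
  have : strip n = ⋂ j, (fun w : Fin n → ℂ => (w j).im) ⁻¹' Set.Ioc (-Real.pi) Real.pi := by
    ext w; simp [strip]
  rw [this]
  exact MeasurableSet.iInter fun j => (Complex.measurable_im.comp (measurable_pi_apply j)) measurableSet_Ioc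

def reimE (n : ℕ) : (Fin n → ℂ) ≃ᵐ (Fin n → ℝ) × (Fin n → ℝ) :=
  (MeasurableEquiv.piCongrRight fun _ : Fin n => Complex.measurableEquivRealProd).trans
    (MeasurableEquiv.arrowProdEquivProdArrow ℝ ℝ (Fin n))

theorem reimE_mp : MeasurePreserving (reimE n) volume volume := by
  have h1 : MeasurePreserving (MeasurableEquiv.piCongrRight fun _ : Fin n =>
    Complex.measurableEquivRealProd) volume volume :=
    volume_preserving_pi (fun i => Complex.volume_preserving_equiv_real_prod)
  exact (volume_measurePreserving_arrowProdEquivProdArrow ℝ ℝ (Fin n)).comp h1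

theorem lintegral_strip (φ : (Fin n → ℝ) → ℝ≥0∞) (hφ : Measurable φ) :
    ∫⁻ w in strip n, φ (reP w) = ENNReal.ofReal (2 * Real.pi) ^ n * ∫⁻ p, φ p := by
  have hs : strip n = reimE n ⁻¹' (Set.univ ×ˢ Set.univ.pi fun _ => Set.Ioc (-Real.pi) Real.pi) := by
    ext w
    simp only [Set.mem_preimage, Set.mem_prod, Set.mem_univ, true_and, Set.mem_univ_pi]
    rfl
  have h := reimE_mp (n := n).setLIntegral_comp_preimage_emb (reimE n).measurableEmbedding
    (fun x => φ x.1) (Set.univ ×ˢ Set.univ.pi fun _ => Set.Ioc (-Real.pi) Real.pi)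
  rw [← hs] at h
  refine h.trans ?_
  rw [show (volume : Measure ((Fin n → ℝ) × (Fin n → ℝ))) = (volume : Measure (Fin n → ℝ)).prod volume from rfl,
    ← Measure.prod_restrict, lintegral_prod (fun x => φ x.1) (hφ.comp measurable_fst).aemeasurable]
  simp only [lintegral_const, Measure.restrict_apply_univ, Measure.restrict_univ]
  rw [lintegral_mul_const _ hφ, mul_comm, Real.volume_pi_Ioc]
  congr 1
  simp only [Finset.prod_const, Finset.card_univ, Fintype.card_fin]
  congr 2; ring

variable (α : Fin (m + 1) → Fin n → ℝ) {c : Fin (m + 1) → ℝ} (hc : ∀ k, 0 < c k)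

theorem continuous_Cov (hc : ∀ k, 0 < c k) : Continuous fun p : Fin n → ℝ => (Cov α c p).det := by
  have hew : ∀ k, Continuous fun p : Fin n → ℝ => ew α c p k := fun k => by
    unfold ew lin; fun_prop
  have hK : Continuous fun p : Fin n → ℝ => Kp α c p := by
    unfold Kp; exact continuous_finsetSum _ fun k _ => hew k
  have hm : ∀ j, Continuous fun p : Fin n → ℝ => mm α c p j := fun j => by
    unfold mm
    exact (continuous_finsetSum _ fun k _ => (hew k).mul continuous_const).div hK
      fun p => (Kp_pos α hc p).ne'
  refine Continuous.matrix_det (continuous_matrix fun j l => ?_)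
  simp only [Cov, Matrix.of_apply]
  exact (continuous_finsetSum _ fun k _ => ((hew k).mul (continuous_const.sub (hm j))).mul
    (continuous_const.sub (hm l))).div hK fun p => (Kp_pos α hc p).ne'

theorem EE_haar (n m : ℕ) : Measure.IsAddHaarMeasure (volume : Measure (EE n m)) := by
  have i0 : ∀ i : Fin n, Measure.IsAddHaarMeasure (volume : Measure (Fin m → ℂ)) := inferInstance
  have i1 : Measure.IsAddHaarMeasure (volume : Measure (Fin n → Fin m → ℂ)) :=
    Measure.pi.isAddHaarMeasure _
  exact Measure.prod.instIsAddHaarMeasure (volume : Measure (Fin n → ℂ))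
    (volume : Measure (Fin n → Fin m → ℂ))

def Sset (n m : ℕ) : Set (EE n m) := strip n ×ˢ Set.univ

theorem count_total (hc : ∀ k, 0 < c k) :
    AEMeasurable (fun y : EE n m => Measure.count (Sset n m ∩ Psi (beta α) ⁻¹' {y}) *
      ENNReal.ofReal (rhoF c (join y.1 y.2))) volume ∧
    ∫⁻ y : EE n m, Measure.count (Sset n m ∩ Psi (beta α) ⁻¹' {y}) *
      ENNReal.ofReal (rhoF c (join y.1 y.2))
      = (n.factorial : ℝ≥0∞) * volume (convexHull ℝ (Set.range α)) := by
  have hS : MeasurableSet (Sset n m) := measurableSet_strip.prod MeasurableSet.univ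
  have hρc : Continuous fun y : EE n m => rhoF c (join y.1 y.2) :=
    (continuous_rhoF c).comp continuous_join
  have hΨc : Continuous (Psi (beta α) : EE n m → EE n m) :=
    continuous_iff_continuousAt.2 fun x => (hasFDerivAt_Psi_real (beta α) x).continuousAt
  have i2 := EE_haar n m
  have := area_formula (volume : Measure (EE n m)) (Psi (beta α)) _ (hasFDerivAt_Psi_real (beta α))
    (continuous_Psi' (beta α)) (Sset n m) hS (fun y => ENNReal.ofReal (rhoF c (join y.1 y.2)))
    hρc.measurable.ennreal_ofReal
  refine ⟨this.1, this.2.trans ?_⟩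
  have h1 : ∀ x : EE n m, ENNReal.ofReal |((PsiL (beta α) x).toContinuousLinearMap.restrictScalars ℝ).det| *
      ENNReal.ofReal (rhoF c (join (Psi (beta α) x).1 (Psi (beta α) x).2))
      = ENNReal.ofReal (Complex.normSq (JPhi (beta α) x.1 x.2).det *
      rhoF c (join (Phi (beta α) x.1 x.2) x.2)) := by
    intro x
    rw [det_Psi_real, abs_of_nonneg (Complex.normSq_nonneg _), ← ENNReal.ofReal_mul (Complex.normSq_nonneg _)]
    rfl
  simp only [h1]
  have hmeas : Measurable fun x : EE n m => ENNReal.ofReal (Complex.normSq (JPhi (beta α) x.1 x.2).det *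
      rhoF c (join (Phi (beta α) x.1 x.2) x.2)) := by
    refine (Continuous.mul ?_ (hρc.comp hΨc)).measurable.ennreal_ofReal
    refine Complex.continuous_normSq.comp (Continuous.matrix_det ?_)
    refine continuous_matrix fun i j => ?_
    simp only [JPhi, Matrix.of_apply, ev]
    fun_prop
  rw [show (volume : Measure (EE n m)) = (volume : Measure (Fin n → ℂ)).prod volume from rfl,
    Sset, ← Measure.prod_restrict, lintegral_prod _ hmeas.aemeasurable]
  simp only [Measure.restrict_univ, lintegral_J α hc]
  rw [lintegral_strip (fun p => ENNReal.ofReal ((n.factorial : ℝ) * (Cov α c p).det / Real.pi ^ n))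
    (((continuous_Cov α hc).const_mul _).div_const _).measurable.ennreal_ofReal,
    ← lintegral_Cov α hc, ← lintegral_const_mul' _ _ (by finiteness),
    ← lintegral_const_mul' _ _ (by finiteness)]
  refine lintegral_congr fun p => ?_
  have := Real.pi_pos
  rw [← ENNReal.ofReal_pow (by positivity), ← ENNReal.ofReal_mul (by positivity),
    ← ENNReal.ofReal_natCast, ← ENNReal.ofReal_mul (by positivity), Matrix.det_smul, Fintype.card_fin]
  congr 1
  rw [mul_pow]; field_simp

def rootsL (F : Fin n → Fin (m + 1) → ℂ) : Set (Fin n → ℂ) :=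
  {w | w ∈ strip n ∧ ∀ i, ∑ k, F i k * ev (α k) w = 0}

theorem Phi_eq_iff (w h : Fin n → ℂ) (g : Fin n → Fin m → ℂ) :
    Phi (beta α) w g = h ↔ ∀ i, ∑ k, join h g i k * ev (α k) w = 0 := by
  rw [funext_iff]
  refine forall_congr' fun i => ?_
  rw [Fin.sum_univ_succ]
  simp only [join_zero, join_succ, ← ev_beta, Phi]
  have : ∑ k : Fin m, g i k * (ev (beta α k) w * ev (α 0) w)
      = (∑ k : Fin m, g i k * ev (beta α k) w) * ev (α 0) w := by
    rw [Finset.sum_mul]; exact Finset.sum_congr rfl fun k _ => by ring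
  rw [this, ← add_mul, mul_eq_zero, or_iff_left (ev_ne _ _), neg_eq_iff_add_eq_zero, add_comm]

theorem fiber_eq (y : EE n m) : Sset n m ∩ Psi (beta α) ⁻¹' {y}
    = (fun w => ((w, y.2) : EE n m)) '' rootsL α (join y.1 y.2) := by
  ext ⟨w, g⟩
  simp only [Sset, Set.mem_inter_iff, Set.mem_prod, Set.mem_univ, and_true, Set.mem_preimage,
    Set.mem_singleton_iff, Psi, Prod.ext_iff, Set.mem_image, rootsL, Set.mem_ofPred_eq]
  constructor
  · rintro ⟨h1, h2, rfl⟩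
    exact ⟨w, ⟨h1, (Phi_eq_iff α _ _ _).1 h2⟩, rfl, rfl⟩
  · rintro ⟨w', ⟨h1, h2⟩, rfl, rfl⟩
    exact ⟨h1, (Phi_eq_iff α _ _ _).2 h2, rfl⟩

theorem rhoF_pos (hc : ∀ k, 0 < c k) (F : Fin n → Fin (m + 1) → ℂ) : 0 < rhoF c F := by
  refine Finset.prod_pos fun i _ => Finset.prod_pos fun k _ => ?_
  have := hc k
  have := Real.pi_pos
  unfold rho1; positivity

theorem lintegral_ncard (hc : ∀ k, 0 < c k) :
    ∫⁻ F : Fin n → Fin (m + 1) → ℂ, ((rootsL α F).ncard : ℝ≥0∞) * ENNReal.ofReal (rhoF c F)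
      = (n.factorial : ℝ≥0∞) * volume (convexHull ℝ (Set.range α)) := by
  obtain ⟨hm, hI⟩ := count_total α hc
  rw [lintegral_split, ← hI]
  have hfin : volume (convexHull ℝ (Set.range α)) ≠ ∞ :=
    ((Set.finite_range α).isCompact_convexHull (𝕜 := ℝ)).measure_lt_top.ne
  have hae := ae_lt_top' hm (by rw [hI]; finiteness)
  refine lintegral_congr_ae ?_
  filter_upwards [hae] with y hy
  congr 1
  have hpos : ENNReal.ofReal (rhoF c (join y.1 y.2)) ≠ 0 := by
    simp [rhoF_pos hc]
  have hlt : Measure.count (Sset n m ∩ Psi (beta α) ⁻¹' {y}) < ∞ := by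
    by_contra hcon
    rw [not_lt, top_le_iff] at hcon
    rw [hcon, ENNReal.top_mul hpos] at hy
    exact lt_irrefl _ hy
  have hΨc : Continuous (Psi (beta α) : EE n m → EE n m) :=
    continuous_iff_continuousAt.2 fun x => (hasFDerivAt_Psi_real (beta α) x).continuousAt
  have hms : MeasurableSet (Sset n m ∩ Psi (beta α) ⁻¹' {y}) :=
    (measurableSet_strip.prod MeasurableSet.univ).inter (hΨc.measurable (measurableSet_singleton y))
  have hinj : Function.Injective (fun w : Fin n → ℂ => ((w, y.2) : EE n m)) := fun a b h => congrArg Prod.fst h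
  have hf := Measure.count_apply_lt_top.1 hlt
  have hf' : (rootsL α (join y.1 y.2)).Finite := by
    rw [fiber_eq] at hf
    exact Set.Finite.of_finite_image hf hinj.injOn
  rw [Measure.count_apply hms, fiber_eq, hinj.encard_image, ← hf'.cast_ncard_eq]
  simp
end SparseRandom
end

section
open MeasureTheory Finset
open scoped ENNReal Pointwise
namespace SparseRandom
set_option linter.unusedSectionVars false
set_option linter.unusedVariables false

variable {n m : ℕ}

def expP (w : Fin n → ℂ) : Fin n → ℂ := fun j => Complex.exp (w j)

theorem mono_expP (w : Fin n → ℂ) (a : Fin n → ℤ) :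
    mono (expP w) a = ev (fun j => (a j : ℝ)) w := by
  unfold mono expP ev
  rw [Complex.exp_sum]
  refine Finset.prod_congr rfl fun j _ => ?_
  rw [← Complex.exp_int_mul]; simp

theorem reindex_eval {A : Finset (Fin n → ℤ)} (e : Fin (m + 1) ≃ A) (f : A → ℂ) (w : Fin n → ℂ) :
    evalP f (expP w) = ∑ k, f (e k) * ev (fun j => (((e k : Fin n → ℤ) j : ℤ) : ℝ)) w := by
  unfold evalP
  rw [← e.sum_comp]
  simp only [mono_expP]

theorem roots_eq {A : Finset (Fin n → ℤ)} (e : Fin (m + 1) ≃ A) (f : Fin n → A → ℂ) :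
    {z | (∀ j, z j ≠ 0) ∧ isRootAt (fun _ => A) f z}
      = expP '' rootsL (fun k j => (((e k : Fin n → ℤ) j : ℤ) : ℝ)) (fun i k => f i (e k)) := by
  ext z
  simp only [Set.mem_ofPred_eq, Set.mem_image, rootsL]
  constructor
  · rintro ⟨h1, h2⟩
    have hz : expP (fun j => Complex.log (z j)) = z := by
      ext j; exact Complex.exp_log (h1 j)
    refine ⟨fun j => Complex.log (z j), ⟨fun j => ⟨Complex.neg_pi_lt_log_im _, Complex.log_im_le_pi _⟩, fun i => ?_⟩, hz⟩
    rw [← reindex_eval, hz]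
    exact h2 i
  · rintro ⟨w, ⟨h1, h2⟩, rfl⟩
    refine ⟨fun j => Complex.exp_ne_zero _, fun i => ?_⟩
    rw [reindex_eval e]
    exact h2 i

theorem expP_injOn : Set.InjOn expP (strip n) := by
  intro w hw w' hw' h
  ext j
  have := congrFun h j
  exact Complex.exp_inj_of_neg_pi_lt_of_le_pi (hw j).1 (hw j).2 (hw' j).1 (hw' j).2 this

theorem ncard_roots {A : Finset (Fin n → ℤ)} (e : Fin (m + 1) ≃ A) (f : Fin n → A → ℂ) :
    Set.ncard {z | (∀ j, z j ≠ 0) ∧ isRootAt (fun _ => A) f z}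
      = (rootsL (fun k j => (((e k : Fin n → ℤ) j : ℤ) : ℝ)) (fun i k => f i (e k))).ncard := by
  rw [roots_eq e]
  exact (expP_injOn.mono fun w hw => hw.1).ncard_image

theorem density_eq {A : Finset (Fin n → ℤ)} (e : Fin (m + 1) ≃ A) (c : (Fin n → ℤ) → ℝ)
    (f : Fin n → A → ℂ) :
    (∏ i, (((2 * Real.pi) ^ A.card)⁻¹ * (∏ a : A, c (a : Fin n → ℤ))⁻¹ *
      Real.exp (- nsq c (f i) / 2))) = rhoF (fun k => c (e k)) (fun i k => f i (e k)) := by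
  unfold rhoF
  refine Finset.prod_congr rfl fun i _ => ?_
  unfold rhoRow rho1 nsq
  rw [Finset.prod_mul_distrib, ← Real.exp_sum, Finset.prod_inv_distrib, Finset.prod_mul_distrib,
    mul_inv]
  congr 1
  · congr 1
    · have : A.card = m + 1 := by
        have := Fintype.card_congr e; simpa using this.symm
      simp [this]
    · rw [← e.prod_comp]
  · congr 1
    rw [← e.sum_comp, ← Finset.sum_neg_distrib, Finset.sum_div]
    refine Finset.sum_congr rfl fun k _ => ?_
    rw [mul_comm 2, ← div_div, neg_div]
    simp only [neg_div]

theorem lintegral_reindex {A : Finset (Fin n → ℤ)} (e : Fin (m + 1) ≃ A)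
    (G : (Fin n → Fin (m + 1) → ℂ) → ℝ≥0∞) :
    ∫⁻ f : Fin n → A → ℂ, G (fun i k => f i (e k)) = ∫⁻ F, G F := by
  have h0 : MeasurePreserving (MeasurableEquiv.piCongrLeft (fun _ : Fin (m + 1) => ℂ) e.symm)
      volume volume := volume_measurePreserving_piCongrLeft (fun _ : Fin (m + 1) => ℂ) e.symm
  have h1 : MeasurePreserving (MeasurableEquiv.piCongrRight fun _ : Fin n =>
    MeasurableEquiv.piCongrLeft (fun _ : Fin (m + 1) => ℂ) e.symm) volume volume :=
    volume_preserving_pi fun i => h0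
  rw [← h1.lintegral_comp_emb (MeasurableEquiv.measurableEmbedding _)]
  refine lintegral_congr fun f => ?_
  congr 1
  ext i k
  have := Equiv.piCongrLeft_apply_apply (fun _ : Fin (m + 1) => ℂ) e.symm (f i) (e k)
  rw [Equiv.symm_apply_apply] at this
  exact this.symm

theorem main_nonempty {A : Finset (Fin n → ℤ)} (e : Fin (m + 1) ≃ A) (c : (Fin n → ℤ) → ℝ)
    (hc : ∀ a ∈ A, 0 < c a) :
    ∫⁻ f, (Set.ncard {z | (∀ j, z j ≠ 0) ∧ isRootAt (fun _ => A) f z} : ℝ≥0∞)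
      ∂(gauss (fun _ => A) (fun _ => c)) =
    ENNReal.ofReal ((n.factorial : ℝ) * (volume (convexHull ℝ (coeA A))).toReal) := by
  unfold gauss
  simp only [density_eq e]
  have hcont : Continuous fun f : Fin n → A → ℂ => rhoF (fun k => c (e k)) (fun i k => f i (e k)) :=
    (continuous_rhoF _).comp (by fun_prop)
  rw [lintegral_withDensity_eq_lintegral_mul_non_measurable _ hcont.measurable.ennreal_ofReal
    (Filter.Eventually.of_forall fun f => ENNReal.ofReal_lt_top)]
  simp only [Pi.mul_apply, ncard_roots e]
  set α : Fin (m + 1) → Fin n → ℝ := fun k j => (((e k : Fin n → ℤ) j : ℤ) : ℝ) with hα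
  have hc' : ∀ k, 0 < c (e k) := fun k => hc _ (e k).2
  refine (lintegral_reindex e fun F => ENNReal.ofReal (rhoF (fun k => c (e k)) F) *
    ((rootsL α F).ncard : ℝ≥0∞)).trans ?_
  simp only [mul_comm (ENNReal.ofReal _)]
  rw [lintegral_ncard α (c := fun k => c (e k)) hc']
  have hr : coeA A = Set.range α := by
    unfold coeA
    ext x
    constructor
    · rintro ⟨a, ha, rfl⟩
      exact ⟨e.symm ⟨a, ha⟩, by simp [hα]⟩
    · rintro ⟨k, rfl⟩
      exact ⟨e k, (e k).2, rfl⟩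
  have hfin : volume (convexHull ℝ (Set.range α)) ≠ ∞ :=
    ((Set.finite_range α).isCompact_convexHull (𝕜 := ℝ)).measure_lt_top.ne
  rw [hr, ENNReal.ofReal_mul (by positivity), ENNReal.ofReal_toReal hfin, ENNReal.ofReal_natCast]

theorem main_empty (hn : 1 ≤ n) (c : (Fin n → ℤ) → ℝ) :
    ∫⁻ f, (Set.ncard {z | (∀ j, z j ≠ 0) ∧ isRootAt (fun _ => (∅ : Finset (Fin n → ℤ))) f z} : ℝ≥0∞)
      ∂(gauss (fun _ => ∅) (fun _ => c)) =
    ENNReal.ofReal ((n.factorial : ℝ) * (volume (convexHull ℝ (coeA (∅ : Finset (Fin n → ℤ))))).toReal) := by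
  have h1 : ∀ f, Set.ncard {z | (∀ j, z j ≠ 0) ∧ isRootAt (fun _ => (∅ : Finset (Fin n → ℤ))) f z} = 0 := by
    intro f
    apply Set.Infinite.ncard
    have hinj : Function.Injective fun (k : ℕ) (_ : Fin n) => ((k : ℂ) + 1) := by
      intro a b h
      have := congrFun h ⟨0, hn⟩
      simpa using this
    refine (Set.infinite_range_of_injective hinj).mono ?_
    rintro _ ⟨k, rfl⟩
    refine ⟨fun j => Nat.cast_add_one_ne_zero k, fun i => ?_⟩
    simp [evalP]
  simp [h1, coeA]

end SparseRandom
end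

open SparseRandom

/-- For the unmixed complex random sparse polynomial system with support
`A` and covariance `C`, the expected number of roots in `(ℂ*)ⁿ` equals `n!·λ(Conv(A))`. -/
theorem statement3 (n : ℕ) (hn : 1 ≤ n) (A : Finset (Fin n → ℤ))
    (c : (Fin n → ℤ) → ℝ) (hc : ∀ a ∈ A, 0 < c a) :
    ∫⁻ f, (Set.ncard {z : Fin n → ℂ |
        (∀ j, z j ≠ 0) ∧ isRootAt (fun _ : Fin n => A) f z} : ℝ≥0∞)
        ∂(gauss (fun _ : Fin n => A) (fun _ => c))
      = ENNReal.ofReal ((n.factorial : ℝ) * (volume (convexHull ℝ (coeA A))).toReal) := by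
  rcases A.eq_empty_or_nonempty with rfl | hA
  · exact main_empty hn c
  · obtain ⟨m, hm⟩ : ∃ m, A.card = m + 1 := Nat.exists_eq_succ_of_ne_zero hA.card_pos.ne'
    exact main_nonempty (A.equivFinOfCardEq hm).symm c hc
end
end

section
/- Let A_1,…,A_n ⊂ ℤⁿ be finite sets whose convex hulls all have dimension n, with diagonal positive definite covariances C_1,…,C_n. Let (p,q) ∈ ℝⁿ×ℝⁿ, z := exp(p+iq), and let f ∈ ℱ satisfy f(z) = 0, ‖f^i‖_{C_i⁻¹} = 1 for every i, and D̂(f) invertible (z is a nondegenerate root). Then sup_{‖ḟ‖≤1} min_{1≤i≤n} ‖DG_f ḟ‖_{A_i} ≤ 1/d_ℙ(f, Σ_{(p,q)}) ≤ sup_{‖ḟ‖≤1} max_{1≤i≤n} ‖DG_f ḟ‖_{A_i}. -/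
open MeasureTheory Finset
open scoped ENNReal Pointwise

noncomputable section

namespace SparseRandom

variable {n : ℕ}

/-- The norm `‖u‖_A` on `ℂⁿ` induced by the Hermitian form `uᴴ·H_A(p)·u`. -/
def normA (H : Matrix (Fin n) (Fin n) ℝ) (u : Fin n → ℂ) : ℝ :=
  Real.sqrt ((∑ j, ∑ k, (starRingEnd ℂ) (u j) * (H j k : ℂ) * u k).re)

/-- The condition map `DG_f : ḟ ↦ D̂(f)⁻¹·(ḟ¹(z),…,ḟⁿ(z))ᵀ`. -/
def DG (A : Fin n → Finset (Fin n → ℤ)) (f : (i : Fin n) → (A i) → ℂ)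
    (z : Fin n → ℂ) (df : (i : Fin n) → (A i) → ℂ) : Fin n → ℂ :=
  (Dhat A f z)⁻¹.mulVec fun i => evalP (df i) z

/-- The norm `‖ḟ‖ = (∑ᵢ ‖ḟ^i‖²_{Cᵢ⁻¹})^{1/2}` on the system space. -/
def normSys (c : Fin n → (Fin n → ℤ) → ℝ) {A : Fin n → Finset (Fin n → ℤ)}
    (df : (i : Fin n) → (A i) → ℂ) : ℝ :=
  Real.sqrt (∑ i, nsq (c i) (df i))

end SparseRandom

namespace SparseRandom

variable {n : ℕ}

/-- The weight `c_a e^{2⟨a,p⟩}`. -/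
def wt (c : (Fin n → ℤ) → ℝ) (p : Fin n → ℝ) (a : Fin n → ℤ) : ℝ :=
  c a * Real.exp (2 * ∑ j, (a j : ℝ) * p j)

/-- Sum of weights. -/
def Sw (A : Finset (Fin n → ℤ)) (c : (Fin n → ℤ) → ℝ) (p : Fin n → ℝ) : ℝ :=
  ∑ a : A, wt c p (a : Fin n → ℤ)

/-- Weighted first moments. -/
def Mw (A : Finset (Fin n → ℤ)) (c : (Fin n → ℤ) → ℝ) (p : Fin n → ℝ) (j : Fin n) : ℝ :=
  ∑ a : A, wt c p (a : Fin n → ℤ) * ((a : Fin n → ℤ) j : ℝ)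

/-- Centered linear form. -/
def cen (A : Finset (Fin n → ℤ)) (c : (Fin n → ℤ) → ℝ) (p : Fin n → ℝ)
    (u : Fin n → ℂ) (a : Fin n → ℤ) : ℂ :=
  ∑ j, ((a j : ℂ) - ((Mw A c p j / Sw A c p : ℝ) : ℂ)) * u j

/-- The linear form of an exponent. -/
def lf (a : Fin n → ℤ) : (Fin n → ℝ) →L[ℝ] ℝ :=
  ∑ j, (a j : ℝ) • (ContinuousLinearMap.proj j : (Fin n → ℝ) →L[ℝ] ℝ)

lemma lf_apply (a : Fin n → ℤ) (p : Fin n → ℝ) : lf a p = ∑ j, (a j : ℝ) * p j := by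
  simp [lf]

lemma lf_single (a : Fin n → ℤ) (j : Fin n) : lf a (Pi.single j 1) = a j := by
  simp [lf_apply, Pi.single_apply]

lemma wt_hasFDerivAt (c : (Fin n → ℤ) → ℝ) (a : Fin n → ℤ) (p : Fin n → ℝ) :
    HasFDerivAt (fun x => wt c x a) ((2 * wt c p a) • lf a) p := by
  have h1 : HasFDerivAt (fun x : Fin n → ℝ => 2 * lf a x) ((2 : ℝ) • lf a) p :=
    (lf a).hasFDerivAt.const_mul 2
  have h2 := (h1.exp).const_mul (c a)
  have h3 : (fun x => wt c x a) = fun x => c a * Real.exp (2 * lf a x) := by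
    funext x; simp [wt, lf_apply]
  rw [h3]
  refine h2.congr_fderiv ?_
  ext v
  simp [wt, lf_apply]
  ring

lemma Sw_hasFDerivAt (A : Finset (Fin n → ℤ)) (c : (Fin n → ℤ) → ℝ) (p : Fin n → ℝ) :
    HasFDerivAt (fun x => Sw A c x) (∑ a : A, (2 * wt c p a) • lf (a : Fin n → ℤ)) p := by
  unfold Sw
  exact HasFDerivAt.fun_sum fun a _ => wt_hasFDerivAt c a p

lemma Mw_hasFDerivAt (A : Finset (Fin n → ℤ)) (c : (Fin n → ℤ) → ℝ) (p : Fin n → ℝ) (j : Fin n) :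
    HasFDerivAt (fun x => Mw A c x j)
      (∑ a : A, ((a : Fin n → ℤ) j : ℝ) • (2 * wt c p a) • lf (a : Fin n → ℤ)) p := by
  unfold Mw
  exact HasFDerivAt.fun_sum fun a _ => (wt_hasFDerivAt c a p).mul_const _

lemma wt_pos {A : Finset (Fin n → ℤ)} {c : (Fin n → ℤ) → ℝ} (hc : ∀ a ∈ A, 0 < c a)
    (p : Fin n → ℝ) (a : A) : 0 < wt c p a :=
  mul_pos (hc a a.2) (Real.exp_pos _)

lemma Sw_pos {A : Finset (Fin n → ℤ)} {c : (Fin n → ℤ) → ℝ} (hA : A.Nonempty)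
    (hc : ∀ a ∈ A, 0 < c a) (p : Fin n → ℝ) : 0 < Sw A c p := by
  have : Nonempty A := hA.to_subtype
  exact Finset.sum_pos (fun a _ => wt_pos hc p a) Finset.univ_nonempty

lemma HessA_eq {A : Finset (Fin n → ℤ)} {c : (Fin n → ℤ) → ℝ} (hA : A.Nonempty)
    (hc : ∀ a ∈ A, 0 < c a) (p : Fin n → ℝ) (j k : Fin n) :
    HessA A c p j k = (∑ a : A, wt c p a * ((a : Fin n → ℤ) j : ℝ) * ((a : Fin n → ℤ) k : ℝ))
      / Sw A c p - (Mw A c p j / Sw A c p) * (Mw A c p k / Sw A c p) := by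
  have h1 : (fun x => fderiv ℝ (gA A c) x (Pi.single j 1)) = fun x => Mw A c x j * (Sw A c x)⁻¹ := by
    funext x
    have hS := (Sw_pos hA hc x).ne'
    have h : HasFDerivAt (gA A c) _ x := ((Sw_hasFDerivAt A c x).log hS).const_mul (1 / 2 : ℝ)
    rw [h.fderiv]
    simp only [smul_apply, _root_.sum_apply, lf_single, Mw,
      smul_eq_mul, mul_assoc, ← Finset.mul_sum]
    ring
  have hS := (Sw_pos hA hc p).ne'
  have h2 := (Mw_hasFDerivAt A c p j).mul
    ((hasDerivAt_inv hS).comp_hasFDerivAt p (Sw_hasFDerivAt A c p))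
  have h2' : HasFDerivAt (fun x => Mw A c x j * (Sw A c x)⁻¹) _ p := h2
  simp only [HessA, Matrix.of_apply]
  rw [h1, h2'.fderiv]
  simp only [add_apply, smul_apply,
    _root_.sum_apply, lf_single, smul_eq_mul, Function.comp]
  have e1 : ∑ a : A, 2 * wt c p a * ((a : Fin n → ℤ) k : ℝ) = 2 * Mw A c p k := by
    simp only [Mw, Finset.mul_sum, mul_assoc]
  have e2 : ∑ a : A, ((a : Fin n → ℤ) j : ℝ) * (2 * wt c p a * ((a : Fin n → ℤ) k : ℝ))
      = 2 * ∑ a : A, wt c p a * ((a : Fin n → ℤ) j : ℝ) * ((a : Fin n → ℤ) k : ℝ) := by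
    rw [Finset.mul_sum]
    exact Finset.sum_congr rfl fun a _ => by ring
  rw [e1, e2]
  field_simp
  ring

lemma HessA_eq' {A : Finset (Fin n → ℤ)} {c : (Fin n → ℤ) → ℝ} (hA : A.Nonempty)
    (hc : ∀ a ∈ A, 0 < c a) (p : Fin n → ℝ) (j k : Fin n) :
    Sw A c p * HessA A c p j k = ∑ a : A, wt c p a *
      (((a : Fin n → ℤ) j : ℝ) - Mw A c p j / Sw A c p) *
      (((a : Fin n → ℤ) k : ℝ) - Mw A c p k / Sw A c p) := by
  have hS := (Sw_pos hA hc p).ne'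
  rw [HessA_eq hA hc]
  have : ∀ a : A, wt c p a *
      (((a : Fin n → ℤ) j : ℝ) - Mw A c p j / Sw A c p) *
      (((a : Fin n → ℤ) k : ℝ) - Mw A c p k / Sw A c p)
      = wt c p a * ((a : Fin n → ℤ) j : ℝ) * ((a : Fin n → ℤ) k : ℝ)
        - (wt c p a * ((a : Fin n → ℤ) j : ℝ)) * (Mw A c p k / Sw A c p)
        - (wt c p a * ((a : Fin n → ℤ) k : ℝ)) * (Mw A c p j / Sw A c p)
        + wt c p a * ((Mw A c p j / Sw A c p) * (Mw A c p k / Sw A c p)) := fun a => by ring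
  simp only [this, Finset.sum_add_distrib, Finset.sum_sub_distrib, ← Finset.sum_mul]
  change _ = _ - Mw A c p j * _ - Mw A c p k * _ + Sw A c p * _
  field_simp
  ring

lemma form_eq {A : Finset (Fin n → ℤ)} {c : (Fin n → ℤ) → ℝ} (hA : A.Nonempty)
    (hc : ∀ a ∈ A, 0 < c a) (p : Fin n → ℝ) (u : Fin n → ℂ) :
    (Sw A c p : ℂ) * (∑ j, ∑ k, (starRingEnd ℂ) (u j) * (HessA A c p j k : ℂ) * u k) =
      ((∑ a : A, wt c p a * Complex.normSq (cen A c p u a) : ℝ) : ℂ) := by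
  have key : ∀ j k, (Sw A c p : ℂ) * ((starRingEnd ℂ) (u j) * (HessA A c p j k : ℂ) * u k)
      = ∑ a : A, (wt c p a : ℂ) * ((starRingEnd ℂ)
        ((((a : Fin n → ℤ) j : ℂ) - ((Mw A c p j / Sw A c p : ℝ) : ℂ)) * u j)) *
        ((((a : Fin n → ℤ) k : ℂ) - ((Mw A c p k / Sw A c p : ℝ) : ℂ)) * u k) := by
    intro j k
    have h := congrArg (fun x : ℝ => (x : ℂ)) (HessA_eq' hA hc p j k)
    simp only [Complex.ofReal_mul, Complex.ofReal_sum] at h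
    calc _ = (starRingEnd ℂ) (u j) * u k * ((Sw A c p : ℂ) * (HessA A c p j k : ℂ)) := by ring
      _ = _ := by
        rw [h, Finset.mul_sum]
        refine Finset.sum_congr rfl fun a _ => ?_
        simp only [map_mul, map_sub, Complex.conj_ofReal, map_intCast, Complex.ofReal_sub,
          Complex.ofReal_intCast]
        ring
  simp only [Finset.mul_sum, key]
  push_cast
  simp only [Complex.normSq_eq_conj_mul_self]
  simp only [cen, map_sum, Finset.sum_mul, Finset.mul_sum]
  rw [Finset.sum_congr rfl fun j _ => Finset.sum_comm]
  rw [Finset.sum_comm]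
  refine Finset.sum_congr rfl fun a _ => ?_
  rw [Finset.sum_comm]
  refine Finset.sum_congr rfl fun a _ => Finset.sum_congr rfl fun b _ => ?_
  push_cast
  ring

lemma normA_sq {A : Finset (Fin n → ℤ)} {c : (Fin n → ℤ) → ℝ} (hA : A.Nonempty)
    (hc : ∀ a ∈ A, 0 < c a) (p : Fin n → ℝ) (u : Fin n → ℂ) :
    Sw A c p * (normA (HessA A c p) u) ^ 2 =
      ∑ a : A, wt c p a * Complex.normSq (cen A c p u a) := by
  have h := congrArg Complex.re (form_eq hA hc p u)
  rw [Complex.re_ofReal_mul, Complex.ofReal_re] at h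
  have hS := Sw_pos hA hc p
  have h0 : 0 ≤ ∑ a : A, wt c p a * Complex.normSq (cen A c p u a) :=
    Finset.sum_nonneg fun a _ => mul_nonneg (wt_pos hc p a).le (Complex.normSq_nonneg _)
  rw [normA, Real.sq_sqrt, h]
  rw [← h] at h0
  exact nonneg_of_mul_nonneg_right h0 hS

lemma zexp_ne (p q : Fin n → ℝ) (j : Fin n) : zexp p q j ≠ 0 := Complex.exp_ne_zero _

lemma normSq_mono (p q : Fin n → ℝ) (a : Fin n → ℤ) :
    Complex.normSq (mono (zexp p q) a) = Real.exp (2 * ∑ j, (a j : ℝ) * p j) := by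
  rw [Complex.normSq_eq_norm_sq, mono, norm_prod]
  have : ∀ j, ‖zexp p q j ^ a j‖ = Real.exp ((a j : ℝ) * p j) := by
    intro j
    rw [norm_zpow, zexp, Complex.norm_exp]
    rw [mul_comm (a j : ℝ), Real.exp_mul, Real.rpow_intCast]
    simp
  simp only [this]
  rw [← Real.exp_sum, ← Real.exp_nat_mul]
  norm_num

lemma cauchy {A : Finset (Fin n → ℤ)} {c : (Fin n → ℤ) → ℝ}
    (hc : ∀ a ∈ A, 0 < c a) (p q : Fin n → ℝ) (h : A → ℂ) (y : A → ℂ) :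
    Complex.normSq (∑ a : A, h a * y a * mono (zexp p q) a) ≤
      nsq c h * ∑ a : A, wt c p a * Complex.normSq (y a) := by
  rw [Complex.normSq_eq_norm_sq]
  have h1 : ‖∑ a : A, h a * y a * mono (zexp p q) a‖ ≤ ∑ a : A, ‖h a * y a * mono (zexp p q) a‖ :=
    norm_sum_le _ _
  refine (pow_le_pow_left₀ (norm_nonneg _) h1 2).trans ?_
  refine Finset.sum_sq_le_sum_mul_sum_of_sq_le_mul _
    (fun a _ => div_nonneg (Complex.normSq_nonneg _) (hc a a.2).le)
    (fun a _ => mul_nonneg (wt_pos hc p a).le (Complex.normSq_nonneg _)) fun a _ => ?_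
  have := (hc a a.2).ne'
  rw [← Complex.normSq_eq_norm_sq, Complex.normSq_mul, Complex.normSq_mul, normSq_mono, wt]
  refine le_of_eq ?_
  field_simp

lemma Dhat_mulVec (A : Fin n → Finset (Fin n → ℤ)) (h : (i : Fin n) → (A i) → ℂ)
    (z u : Fin n → ℂ) (i : Fin n) (m : Fin n → ℂ) (hz : evalP (h i) z = 0) :
    (Dhat A h z).mulVec u i =
      ∑ a : A i, h i a * (∑ j, (((a : Fin n → ℤ) j : ℂ) - m j) * u j) * mono z a := by
  have e : ∀ a : A i, h i a * (∑ j, (((a : Fin n → ℤ) j : ℂ) - m j) * u j) * mono z a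
      = ∑ j, h i a * ((a : Fin n → ℤ) j : ℂ) * mono z a * u j
        - h i a * mono z a * ∑ j, m j * u j := by
    intro a
    simp only [sub_mul, Finset.sum_sub_distrib]
    rw [mul_sub, sub_mul, Finset.mul_sum, Finset.sum_mul]
    congr 1
    · exact Finset.sum_congr rfl fun j _ => by ring
    · ring
  simp only [e, Finset.sum_sub_distrib, ← Finset.sum_mul]
  change _ = _ - evalP (h i) z * _
  rw [hz, zero_mul, sub_zero, Finset.sum_comm]
  simp [Matrix.mulVec, dotProduct, Dhat, Finset.sum_mul]

lemma Dhat_bound {A : Fin n → Finset (Fin n → ℤ)} {c : Fin n → (Fin n → ℤ) → ℝ}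
    (hA : ∀ i, (A i).Nonempty) (hc : ∀ i, ∀ a ∈ A i, 0 < c i a) (p q : Fin n → ℝ)
    (h : (i : Fin n) → (A i) → ℂ) (hz : isRootAt A h (zexp p q)) (u : Fin n → ℂ) (i : Fin n) :
    Complex.normSq ((Dhat A h (zexp p q)).mulVec u i) ≤
      nsq (c i) (h i) * (Sw (A i) (c i) p * (normA (HessA (A i) (c i) p) u) ^ 2) := by
  rw [Dhat_mulVec A h _ u i (fun j => ((Mw (A i) (c i) p j / Sw (A i) (c i) p : ℝ) : ℂ)) (hz i),
    normA_sq (hA i) (hc i)]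
  exact cauchy (hc i) p q (h i) (fun a => cen (A i) (c i) p u a)

lemma jac_det (A : Fin n → Finset (Fin n → ℤ)) (g : (i : Fin n) → (A i) → ℂ) (p q : Fin n → ℝ) :
    (jac A g (zexp p q)).det = 0 ↔ (Dhat A g (zexp p q)).det = 0 := by
  have : Dhat A g (zexp p q) = jac A g (zexp p q) * Matrix.diagonal (zexp p q) := by
    ext i j
    rw [Matrix.mul_diagonal]
    simp only [Dhat, jac, Matrix.of_apply, Finset.sum_mul]
    exact Finset.sum_congr rfl fun a _ => (div_mul_cancel₀ _ (zexp_ne p q j)).symm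
  rw [this, Matrix.det_mul, Matrix.det_diagonal, mul_eq_zero, or_iff_left]
  exact Finset.prod_ne_zero_iff.2 fun j _ => zexp_ne p q j

lemma nsq_nonneg {A : Finset (Fin n → ℤ)} {c : (Fin n → ℤ) → ℝ}
    (hc : ∀ a ∈ A, 0 < c a) (h : A → ℂ) : 0 ≤ nsq c h :=
  Finset.sum_nonneg fun a _ => div_nonneg (Complex.normSq_nonneg _) (hc a a.2).le

lemma evalP_smul {A : Finset (Fin n → ℤ)} (t : ℂ) (g : A → ℂ) (z : Fin n → ℂ) :
    evalP (fun a => t * g a) z = t * evalP g z := by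
  simp [evalP, Finset.mul_sum, mul_assoc]

lemma evalP_sub {A : Finset (Fin n → ℤ)} (f g : A → ℂ) (z : Fin n → ℂ) :
    evalP (fun a => f a - g a) z = evalP f z - evalP g z := by
  simp [evalP, sub_mul]

lemma Dhat_sub (A : Fin n → Finset (Fin n → ℤ)) (f g : (i : Fin n) → (A i) → ℂ) (z : Fin n → ℂ) :
    Dhat A (fun i a => f i a - g i a) z = Dhat A f z - Dhat A g z := by
  ext i j
  simp [Dhat, sub_mul]

lemma Dhat_smul (A : Fin n → Finset (Fin n → ℤ)) (t : Fin n → ℂ) (g : (i : Fin n) → (A i) → ℂ)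
    (z : Fin n → ℂ) :
    Dhat A (fun i a => t i * g i a) z = Matrix.diagonal t * Dhat A g z := by
  ext i j
  simp [Dhat, Finset.mul_sum, mul_assoc]

lemma Sigma_smul {A : Fin n → Finset (Fin n → ℤ)} {p q : Fin n → ℝ} (t : Fin n → ℂ)
    {g : (i : Fin n) → (A i) → ℂ} (hg : g ∈ SigmaPQ A p q) :
    (fun i a => t i * g i a) ∈ SigmaPQ A p q := by
  refine ⟨fun i => ?_, ?_⟩
  · rw [evalP_smul, hg.1 i, mul_zero]
  · rw [jac_det, Dhat_smul, Matrix.det_mul, (jac_det A g p q).1 hg.2, mul_zero]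

lemma dP_le {A : Fin n → Finset (Fin n → ℤ)} {c : Fin n → (Fin n → ℤ) → ℝ}
    (hc : ∀ i, ∀ a ∈ A i, 0 < c i a) (f g : (i : Fin n) → (A i) → ℂ)
    (hnorm : ∀ i, nsq (c i) (f i) = 1) :
    dP c f g ≤ Real.sqrt (∑ i, nsq (c i) (fun a => f i a - g i a)) := by
  refine Real.sqrt_le_sqrt (Finset.sum_le_sum fun i _ => ?_)
  rw [hnorm, div_one]
  refine (ciInf_le ⟨0, ?_⟩ (1 : ℂ)).trans (by simp)
  rintro _ ⟨l, rfl⟩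
  exact nsq_nonneg (hc i) _

lemma le_dP {A : Fin n → Finset (Fin n → ℤ)} {c : Fin n → (Fin n → ℤ) → ℝ}
    (f g : (i : Fin n) → (A i) → ℂ)
    (hnorm : ∀ i, nsq (c i) (f i) = 1) (D : ℝ)
    (hD : ∀ t : Fin n → ℂ, D ^ 2 ≤ ∑ i, nsq (c i) (fun a => f i a - t i * g i a)) :
    D ≤ dP c f g := by
  refine Real.le_sqrt_of_sq_le ?_
  simp only [hnorm, div_one]
  refine le_of_forall_pos_le_add fun ε hε => ?_
  have hε' : 0 < ε / (n + 1) := by positivity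
  have : ∀ i, ∃ l : ℂ, nsq (c i) (fun a => f i a - l * g i a) <
      (⨅ lam : ℂ, nsq (c i) (fun a => f i a - lam * g i a)) + ε / (n + 1) := fun i =>
    exists_lt_of_ciInf_lt (lt_add_of_pos_right _ hε')
  choose t ht using this
  refine (hD t).trans ((Finset.sum_le_sum fun i _ => (ht i).le).trans ?_)
  rw [Finset.sum_add_distrib]
  simp only [Finset.sum_const, Finset.card_univ, Fintype.card_fin, nsmul_eq_mul]
  have : (n : ℝ) * (ε / (n + 1)) ≤ ε := by
    rw [mul_div_assoc', div_le_iff₀ (by positivity)]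
    nlinarith
  linarith

lemma normA_smul (H : Matrix (Fin n) (Fin n) ℝ) (r : ℝ) (hr : 0 ≤ r) (u : Fin n → ℂ) :
    normA H (fun j => (r : ℂ) * u j) = r * normA H u := by
  have : (∑ j, ∑ k, (starRingEnd ℂ) ((r : ℂ) * u j) * (H j k : ℂ) * ((r : ℂ) * u k))
      = ((r ^ 2 : ℝ) : ℂ) * ∑ j, ∑ k, (starRingEnd ℂ) (u j) * (H j k : ℂ) * u k := by
    simp only [Finset.mul_sum, map_mul, Complex.conj_ofReal]
    push_cast
    exact Finset.sum_congr rfl fun j _ => Finset.sum_congr rfl fun k _ => by ring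
  rw [normA, this, Complex.re_ofReal_mul, Real.sqrt_mul (sq_nonneg r), Real.sqrt_sq hr, normA]

lemma normA_bdd (H : Matrix (Fin n) (Fin n) ℝ) (B : ℝ) (u : Fin n → ℂ)
    (hu : ∀ j, ‖u j‖ ≤ B) : normA H u ≤ Real.sqrt (∑ j, ∑ k, B * |H j k| * B) := by
  refine Real.sqrt_le_sqrt ?_
  simp only [Complex.re_sum]
  refine Finset.sum_le_sum fun j _ => Finset.sum_le_sum fun k _ => ?_
  refine (Complex.re_le_norm _).trans ?_
  have hB : 0 ≤ B := (norm_nonneg _).trans (hu j)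
  simp only [norm_mul, RCLike.norm_conj, Complex.norm_real, Real.norm_eq_abs]
  gcongr
  · exact hu j
  · exact hu k

/-- evaluation bound -/
lemma evalP_bound {A : Finset (Fin n → ℤ)} {c : (Fin n → ℤ) → ℝ}
    (hc : ∀ a ∈ A, 0 < c a) (p q : Fin n → ℝ) (h : A → ℂ) :
    Complex.normSq (evalP h (zexp p q)) ≤ nsq c h * Sw A c p := by
  have := cauchy hc p q h (fun _ => 1)
  simpa [evalP, Sw] using this

lemma bdd_DG {A : Fin n → Finset (Fin n → ℤ)} {c : Fin n → (Fin n → ℤ) → ℝ}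
    (hc : ∀ i, ∀ a ∈ A i, 0 < c i a) (p q : Fin n → ℝ) (f : (i : Fin n) → (A i) → ℂ) :
    BddAbove (Set.range fun df : {g : (i : Fin n) → (A i) → ℂ // normSys c g ≤ 1} =>
      ⨆ i : Fin n, normA (HessA (A i) (c i) p) (DG A f (zexp p q) df)) := by
  set M := (Dhat A f (zexp p q))⁻¹ with hM
  set B : ℝ := ∑ j, ∑ k, ‖M j k‖ * Real.sqrt (Sw (A k) (c k) p) with hB
  refine ⟨∑ i, Real.sqrt (∑ j, ∑ k, B * |HessA (A i) (c i) p j k| * B), ?_⟩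
  rintro _ ⟨⟨g, hg⟩, rfl⟩
  have h1 : ∀ i, nsq (c i) (g i) ≤ 1 := by
    intro i
    rw [normSys, Real.sqrt_le_iff, one_pow] at hg
    replace hg := hg.2
    exact (Finset.single_le_sum (f := fun i => nsq (c i) (g i))
      (fun i _ => nsq_nonneg (hc i) _) (Finset.mem_univ i)).trans hg
  have hev : ∀ i, ‖evalP (g i) (zexp p q)‖ ≤ Real.sqrt (Sw (A i) (c i) p) := by
    intro i
    refine Real.le_sqrt_of_sq_le ?_
    rw [← Complex.normSq_eq_norm_sq]
    refine (evalP_bound (hc i) p q (g i)).trans ?_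
    have : 0 ≤ Sw (A i) (c i) p := Finset.sum_nonneg fun a _ => (wt_pos (hc i) p a).le
    nlinarith [h1 i]
  have hu : ∀ j, ‖DG A f (zexp p q) g j‖ ≤ B := by
    intro j
    have : ‖DG A f (zexp p q) g j‖ ≤ ∑ k, ‖M j k‖ * Real.sqrt (Sw (A k) (c k) p) := by
      simp only [DG, Matrix.mulVec, dotProduct]
      refine (norm_sum_le _ _).trans (Finset.sum_le_sum fun k _ => ?_)
      rw [norm_mul]
      exact mul_le_mul_of_nonneg_left (hev k) (norm_nonneg _)
    refine this.trans ?_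
    exact Finset.single_le_sum (f := fun j => ∑ k, ‖M j k‖ * Real.sqrt (Sw (A k) (c k) p))
      (fun i _ => Finset.sum_nonneg fun k _ => by positivity) (Finset.mem_univ j)
  refine Real.iSup_le (fun i => ?_) (Finset.sum_nonneg fun i _ => Real.sqrt_nonneg _)
  refine (normA_bdd _ B _ hu).trans ?_
  exact Finset.single_le_sum
    (f := fun i => Real.sqrt (∑ j, ∑ k, B * |HessA (A i) (c i) p j k| * B))
    (fun i _ => Real.sqrt_nonneg _) (Finset.mem_univ i)

/-- Lift of a value vector to a polynomial. -/
lemma lift_eval {A : Finset (Fin n → ℤ)} {c : (Fin n → ℤ) → ℝ} (hA : A.Nonempty)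
    (hc : ∀ a ∈ A, 0 < c a) (p q : Fin n → ℝ) (v : ℂ) :
    ∃ h : A → ℂ, evalP h (zexp p q) = v ∧ nsq c h = Complex.normSq v / Sw A c p := by
  have hS := (Sw_pos hA hc p).ne'
  refine ⟨fun a => v / (Sw A c p : ℂ) * ((c a : ℂ) * (starRingEnd ℂ) (mono (zexp p q) a)), ?_, ?_⟩
  · rw [evalP_smul]
    have : evalP (fun a : A => (c a : ℂ) * (starRingEnd ℂ) (mono (zexp p q) a)) (zexp p q)
        = (Sw A c p : ℂ) := by
      simp only [evalP, Sw, wt, ← normSq_mono p q]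
      push_cast
      refine Finset.sum_congr rfl fun a _ => ?_
      rw [mul_assoc, Complex.normSq_eq_conj_mul_self]
    rw [this, div_mul_cancel₀]
    exact_mod_cast hS
  · have : ∀ a : A, Complex.normSq (v / (Sw A c p : ℂ) *
        ((c a : ℂ) * (starRingEnd ℂ) (mono (zexp p q) a))) / c a
        = Complex.normSq v / (Sw A c p) ^ 2 * wt c p a := by
      intro a
      have := (hc a a.2).ne'
      simp only [Complex.normSq_mul, Complex.normSq_div, Complex.normSq_conj, normSq_mono,
        Complex.normSq_ofReal, wt]
      field_simp
    simp only [nsq, this, ← Finset.mul_sum]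
    change _ * Sw A c p = _
    field_simp

lemma lift_deriv {A : Finset (Fin n → ℤ)} {c : (Fin n → ℤ) → ℝ} (hA : A.Nonempty)
    (hc : ∀ a ∈ A, 0 < c a) (p q : Fin n → ℝ) (u : Fin n → ℂ) (v : ℂ)
    (hu : 0 < normA (HessA A c p) u) :
    ∃ h : A → ℂ, evalP h (zexp p q) = 0 ∧
      ∑ a : A, h a * cen A c p u a * mono (zexp p q) a = v ∧
      nsq c h = Complex.normSq v / (Sw A c p * normA (HessA A c p) u ^ 2) := by
  have hS := Sw_pos hA hc p
  set T := Sw A c p * normA (HessA A c p) u ^ 2 with hT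
  have hT0 : T ≠ 0 := by positivity
  have hTe := normA_sq hA hc p u
  rw [← hT] at hTe
  refine ⟨fun a => v / (T : ℂ) * ((c a : ℂ) *
    (starRingEnd ℂ) (mono (zexp p q) a * cen A c p u a)), ?_, ?_, ?_⟩
  · rw [evalP_smul]
    have : evalP (fun a : A => (c a : ℂ) * (starRingEnd ℂ) (mono (zexp p q) a * cen A c p u a))
        (zexp p q) = (starRingEnd ℂ) (∑ a : A, (wt c p a : ℂ) * cen A c p u a) := by
      simp only [evalP, wt, ← normSq_mono p q, map_sum, map_mul]
      refine Finset.sum_congr rfl fun a _ => ?_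
      rw [Complex.conj_ofReal]
      push_cast
      rw [Complex.normSq_eq_conj_mul_self]
      ring
    rw [this]
    have h0 : ∑ a : A, (wt c p a : ℂ) * cen A c p u a = 0 := by
      simp only [cen, Finset.mul_sum]
      rw [Finset.sum_comm]
      refine Finset.sum_eq_zero fun j _ => ?_
      have h1 : ∑ a : A, wt c p a * (((a : Fin n → ℤ) j : ℝ) - Mw A c p j / Sw A c p) = 0 := by
        simp only [mul_sub, Finset.sum_sub_distrib, ← Finset.sum_mul]
        change Mw A c p j - Sw A c p * _ = 0
        field_simp
        ring
      have h2 := congrArg (fun x : ℝ => (x : ℂ) * u j) h1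
      simp only [Complex.ofReal_zero, zero_mul] at h2
      rw [← h2]
      push_cast
      rw [Finset.sum_mul]
      exact Finset.sum_congr rfl fun a _ => by ring
    rw [h0, map_zero, mul_zero]
  · have : ∀ a : A, v / (T : ℂ) * ((c a : ℂ) * (starRingEnd ℂ) (mono (zexp p q) a * cen A c p u a))
        * cen A c p u a * mono (zexp p q) a
        = v / (T : ℂ) * ((wt c p a * Complex.normSq (cen A c p u a) : ℝ) : ℂ) := by
      intro a
      simp only [wt, ← normSq_mono p q, map_mul]
      push_cast
      simp only [Complex.normSq_eq_conj_mul_self]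
      ring
    simp only [this, ← Finset.mul_sum, ← Complex.ofReal_sum]
    rw [← hTe, div_mul_cancel₀]
    exact_mod_cast hT0
  · have : ∀ a : A, Complex.normSq (v / (T : ℂ) *
        ((c a : ℂ) * (starRingEnd ℂ) (mono (zexp p q) a * cen A c p u a))) / c a
        = Complex.normSq v / T ^ 2 * (wt c p a * Complex.normSq (cen A c p u a)) := by
      intro a
      have := (hc a a.2).ne'
      simp only [Complex.normSq_mul, Complex.normSq_div, Complex.normSq_conj, normSq_mono,
        Complex.normSq_ofReal, wt]
      field_simp
    simp only [nsq, this, ← Finset.mul_sum]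
    rw [← hTe]
    field_simp

end SparseRandom

open SparseRandom

/-- **Condition Number Theorem.** If `z = exp(p+iq)` is a nondegenerate root
of `f`, with all supports having full-dimensional convex hull and `‖f^i‖_{Cᵢ⁻¹} = 1`, then
`sup_{‖ḟ‖≤1} min_i ‖DG_f ḟ‖_{A_i} ≤ 1/d_ℙ(f,Σ_{(p,q)}) ≤ sup_{‖ḟ‖≤1} max_i ‖DG_f ḟ‖_{A_i}`. -/
theorem statement5 (n : ℕ) (hn : 1 ≤ n) (A : Fin n → Finset (Fin n → ℤ))
    (hdim : ∀ i, affineSpan ℝ (coeA (A i)) = ⊤)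
    (c : Fin n → (Fin n → ℤ) → ℝ) (hc : ∀ i, ∀ a ∈ A i, 0 < c i a)
    (p q : Fin n → ℝ) (f : (i : Fin n) → (A i) → ℂ)
    (hroot : isRootAt A f (zexp p q))
    (hnorm : ∀ i, nsq (c i) (f i) = 1)
    (hnd : (Dhat A f (zexp p q)).det ≠ 0) :
    (⨆ df : {g : (i : Fin n) → (A i) → ℂ // normSys c g ≤ 1},
        ⨅ i : Fin n, normA (HessA (A i) (c i) p) (DG A f (zexp p q) df))
      ≤ 1 / dPS c f (SigmaPQ A p q) ∧
    1 / dPS c f (SigmaPQ A p q)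
      ≤ (⨆ df : {g : (i : Fin n) → (A i) → ℂ // normSys c g ≤ 1},
          ⨆ i : Fin n, normA (HessA (A i) (c i) p) (DG A f (zexp p q) df)) := by
  have hA : ∀ i, (A i).Nonempty := by
    intro i
    by_contra h
    rw [Finset.not_nonempty_iff_eq_empty] at h
    have h1 := hnorm i
    have : IsEmpty (A i) := by rw [h]; infer_instance
    simp [nsq] at h1
  have hne : Nonempty (Fin n) := ⟨⟨0, hn⟩⟩
  have h0S : (fun _ _ => 0 : (i : Fin n) → (A i) → ℂ) ∈ SigmaPQ A p q := by
    refine ⟨fun i => by simp [evalP], ?_⟩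
    rw [jac_det]
    have : Dhat A (fun _ _ => 0) (zexp p q) = 0 := by ext i j; simp [Dhat]
    rw [this, Matrix.det_zero]
  have hunit : IsUnit (Dhat A f (zexp p q)).det := isUnit_iff_ne_zero.2 hnd
  have hbdd := bdd_DG hc p q f
  set K : ℝ := ⨆ df : {g : (i : Fin n) → (A i) → ℂ // normSys c g ≤ 1},
          ⨆ i : Fin n, normA (HessA (A i) (c i) p) (DG A f (zexp p q) df) with hK
  have hK0 : 0 ≤ K := Real.iSup_nonneg fun df => Real.iSup_nonneg fun i => Real.sqrt_nonneg _
  -- lower bound on the distance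
  have key : ∀ g ∈ SigmaPQ A p q, 1 ≤ (∑ i, nsq (c i) (fun a => f i a - g i a)) * K ^ 2 := by
    intro g hg
    obtain ⟨u, hu0, hu⟩ := Matrix.exists_mulVec_eq_zero_iff.2 ((jac_det A g p q).1 hg.2)
    set v := (Dhat A f (zexp p q)).mulVec u with hv
    have hv0 : v ≠ 0 := by
      intro h
      exact hnd (Matrix.exists_mulVec_eq_zero_iff.1 ⟨u, hu0, h⟩)
    have hvh : (Dhat A (fun i a => f i a - g i a) (zexp p q)).mulVec u = v := by
      rw [Dhat_sub, Matrix.sub_mulVec, hu, sub_zero]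
    have hz : isRootAt A (fun i a => f i a - g i a) (zexp p q) := by
      intro i
      rw [evalP_sub, hroot i, hg.1 i, sub_zero]
    have hSp : ∀ i, 0 < Sw (A i) (c i) p := fun i => Sw_pos (hA i) (hc i) p
    set N2 : ℝ := ∑ i, Complex.normSq (v i) / Sw (A i) (c i) p with hN2
    have hN2pos : 0 < N2 := by
      obtain ⟨i, hi⟩ := Function.ne_iff.1 hv0
      refine Finset.sum_pos' (fun i _ => div_nonneg (Complex.normSq_nonneg _) (hSp i).le)
        ⟨i, Finset.mem_univ i, div_pos (Complex.normSq_pos.2 hi) (hSp i)⟩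
    set N := Real.sqrt N2 with hN
    have hNpos : 0 < N := Real.sqrt_pos.2 hN2pos
    have hNsq : N ^ 2 = N2 := Real.sq_sqrt hN2pos.le
    choose w hw1 hw2 using fun i => lift_eval (hA i) (hc i) p q (((N⁻¹ : ℝ) : ℂ) * v i)
    have hw : normSys c w ≤ 1 := by
      rw [normSys, Real.sqrt_le_iff]
      refine ⟨zero_le_one, le_of_eq ?_⟩
      simp only [hw2, Complex.normSq_mul, Complex.normSq_ofReal, mul_div_assoc, ← Finset.mul_sum]
      rw [← hN2, ← hNsq]
      field_simp
    have hDG : DG A f (zexp p q) w = fun j => ((N⁻¹ : ℝ) : ℂ) * u j := by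
      have e : (fun i => evalP (w i) (zexp p q)) = ((N⁻¹ : ℝ) : ℂ) • v := by
        funext i; simp [hw1]
      rw [DG, e, Matrix.mulVec_smul, hv, Matrix.mulVec_mulVec, Matrix.nonsing_inv_mul _ hunit,
        Matrix.one_mulVec]
      rfl
    have hle : ∀ i, normA (HessA (A i) (c i) p) u ≤ N * K := by
      intro i
      have h1 := le_ciSup hbdd ⟨w, hw⟩
      have h2 := le_ciSup (Set.finite_range fun i : Fin n =>
        normA (HessA (A i) (c i) p) (DG A f (zexp p q) w)).bddAbove i
      have h3 := h2.trans h1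
      rw [← hK] at h3
      simp only [hDG] at h3
      rw [normA_smul _ _ (inv_nonneg.2 hNpos.le)] at h3
      rwa [inv_mul_le_iff₀ hNpos] at h3
    have hfin : N2 ≤ (∑ i, nsq (c i) (fun a => f i a - g i a)) * (N2 * K ^ 2) := by
      rw [Finset.sum_mul, hN2]
      refine Finset.sum_le_sum fun i _ => ?_
      rw [div_le_iff₀ (hSp i)]
      have hb := Dhat_bound hA hc p q _ hz u i
      rw [hvh] at hb
      refine hb.trans ?_
      have h4 : normA (HessA (A i) (c i) p) u ^ 2 ≤ N2 * K ^ 2 := by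
        rw [← hNsq, ← mul_pow]
        exact pow_le_pow_left₀ (Real.sqrt_nonneg _) (hle i) 2
      have h5 := mul_le_mul_of_nonneg_left h4
        (mul_nonneg (nsq_nonneg (hc i) (fun a => f i a - g i a)) (hSp i).le)
      rw [← hN2]
      linarith
    by_contra hcon
    push Not at hcon
    have := mul_lt_mul_of_pos_left hcon hN2pos
    linarith
  have hKpos : 0 < K := by
    rcases hK0.lt_or_eq with h | h
    · exact h
    · have := key _ h0S
      rw [← h] at this
      norm_num at this
  have hdist : K⁻¹ ≤ dPS c f (SigmaPQ A p q) := by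
    refine le_csInf ⟨_, Set.mem_image_of_mem _ h0S⟩ ?_
    rintro _ ⟨g, hg, rfl⟩
    refine le_dP f g hnorm _ fun t => ?_
    rw [inv_pow, inv_le_iff_one_le_mul₀ (by positivity)]
    exact key _ (Sigma_smul t hg)
  have hdpos : 0 < dPS c f (SigmaPQ A p q) := (inv_pos.2 hKpos).trans_le hdist
  refine ⟨?_, ?_⟩
  · refine Real.iSup_le ?_ (by positivity)
    rintro ⟨w, hw⟩
    change (⨅ i : Fin n, normA (HessA (A i) (c i) p) (DG A f (zexp p q) w)) ≤ _
    set u := DG A f (zexp p q) w with hu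
    set m := ⨅ i : Fin n, normA (HessA (A i) (c i) p) u with hm
    have hmle : ∀ i, m ≤ normA (HessA (A i) (c i) p) u := fun i =>
      ciInf_le (Set.finite_range _).bddBelow i
    rcases le_or_gt m 0 with hm0 | hm0
    · exact hm0.trans (by positivity)
    have hDu : (Dhat A f (zexp p q)).mulVec u = fun i => evalP (w i) (zexp p q) := by
      rw [hu, DG, Matrix.mulVec_mulVec, Matrix.mul_nonsing_inv _ hunit, Matrix.one_mulVec]
    have hu0 : u ≠ 0 := by
      intro h
      have := hm0.trans_le (hmle ⟨0, hn⟩)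
      rw [h] at this
      simp [normA] at this
    choose h hh1 hh2 hh3 using fun i => lift_deriv (hA i) (hc i) p q u
      (evalP (w i) (zexp p q)) (hm0.trans_le (hmle i))
    have hg : (fun i a => f i a - h i a) ∈ SigmaPQ A p q := by
      refine ⟨fun i => ?_, ?_⟩
      · rw [evalP_sub, hroot i, hh1, sub_zero]
      · rw [jac_det]
        refine Matrix.exists_mulVec_eq_zero_iff.1 ⟨u, hu0, ?_⟩
        rw [Dhat_sub, Matrix.sub_mulVec, hDu]
        funext i
        have := Dhat_mulVec A h _ u i
          (fun j => ((Mw (A i) (c i) p j / Sw (A i) (c i) p : ℝ) : ℂ)) (hh1 i)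
        rw [Pi.sub_apply, this]
        have h2 := hh2 i
        simp only [cen] at h2
        rw [h2]
        simp
    have hd1 : dPS c f (SigmaPQ A p q) ≤ dP c f (fun i a => f i a - h i a) := by
      refine csInf_le ⟨0, ?_⟩ (Set.mem_image_of_mem _ hg)
      rintro _ ⟨g, _, rfl⟩
      exact Real.sqrt_nonneg _
    have hd2 := hd1.trans (dP_le hc f _ hnorm)
    simp only [sub_sub_cancel] at hd2
    have hs : ∑ i, nsq (c i) (fun a => h i a) ≤ (m⁻¹) ^ 2 := by
      have hw2 : ∑ i, nsq (c i) (w i) ≤ 1 := by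
        rw [normSys, Real.sqrt_le_iff, one_pow] at hw
        exact hw.2
      have : ∀ i, nsq (c i) (fun a => h i a) ≤ nsq (c i) (w i) * (m⁻¹) ^ 2 := by
        intro i
        have hSp := Sw_pos (hA i) (hc i) p
        have hni := hm0.trans_le (hmle i)
        have e := hh3 i
        change nsq (c i) (h i) ≤ _
        rw [e, div_le_iff₀ (by positivity)]
        refine (evalP_bound (hc i) p q (w i)).trans ?_
        have h6 : 1 ≤ (m⁻¹) ^ 2 * normA (HessA (A i) (c i) p) u ^ 2 := by
          rw [← mul_pow]
          refine one_le_pow₀ ?_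
          rw [le_inv_mul_iff₀ hm0, mul_one]
          exact hmle i
        have h7 := mul_le_mul_of_nonneg_left h6
          (mul_nonneg (nsq_nonneg (hc i) (w i)) hSp.le)
        linarith
      refine (Finset.sum_le_sum fun i _ => this i).trans ?_
      rw [← Finset.sum_mul]
      exact mul_le_of_le_one_left (sq_nonneg _) hw2
    have hd3 : dPS c f (SigmaPQ A p q) ≤ m⁻¹ := by
      refine hd2.trans ?_
      rw [Real.sqrt_le_iff]
      exact ⟨by positivity, hs⟩
    rw [one_div]
    exact (le_inv_comm₀ hm0 hdpos).2 hd3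
  · rw [one_div]
    exact inv_le_of_inv_le₀ hKpos hdist
end
end
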